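/- Let N ≥ 3, let α > 0 and β > 0, and let p, q > 1 satisfy q > β/N and (N+α)/(p+1) + (N+β)/(q+1) > N - 2. Then the Hénon system -Δv = |x|^α u^p, -Δu = |x|^β v^q in B, u > 0, v > 0 in B, u = v = 0 on ∂B, has a radially symmetric positive classical solution: a pair (u, v) of functions continuous on B̄, twice continuously differentiable on B, positive on B, vanishing on ∂B, satisfying both equations pointwise on B, with u(x) and v(x) depending only on |x|. -/

import Mathlib

open MeasureTheory Metric Set Filter

noncomputable section

abbrev E (N : ℕ) := EuclideanSpace ℝ (Fin N)

/-- The Laplacian: sum of pure second partial derivatives. -/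
def lap {N : ℕ} (u : E N → ℝ) (x : E N) : ℝ :=
  ∑ i, fderiv ℝ (fun y => fderiv ℝ u y (EuclideanSpace.single i 1)) x (EuclideanSpace.single i 1)

/-! Put `m = (N - 2) / 2`. In the Emden–Fowler variable `t = ‖x‖ ^ (2 - N) - 1`, a radial
Dirichlet problem `-Δ v = ‖x‖ ^ α * f` in the ball becomes
`-v'' = (4 * m ^ 2)⁻¹ * (1 + t) ^ (-1 - A) * f` on the half-line, `A = (N + α) / (N - 2)`, whose
Green function is `min s t`. The Hénon system thus reads `w = K_μ (u ^ p)`, `u = K_ν (w ^ q)`,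
where `K_μ` integrates `min s t` against a measure `μ` with finite moments of every order below
`A`, and likewise for `ν` and `B = (N + β) / (N - 2)`.

Since `min s t ≤ (1 + s) ^ (1 - θ) * (1 + t) ^ θ`, the operators are compact on the natural
Lebesgue spaces as soon as `θ * (p + 1) < A` and `(1 - θ) * (q + 1) < B`; such a `θ` exists
exactly below the critical hyperbola `A / (p + 1) + B / (q + 1) = 1`. Maximizing
`∫ K_μ (f ^ p) ^ (q + 1) ∂ν` over the unit ball of `L ^ (p + 1) (μ)` then yields a solution up to
scaling, and `p * q ≠ 1` lets one rescale. A bootstrap on growth exponents bounds the solution, so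
that the sources decay like `(1 + t) ^ (-1 - A)`; because `α > 0` means `A > (m + 1) / m`, this
decay is fast enough for the radial solution to be `C²` at the origin.
-/

section Compactness

open scoped Topology

theorem exists_subseq_tendsto_of_equicontinuous {X : Type*} [TopologicalSpace X]
    [TopologicalSpace.SeparableSpace X] {F : ℕ → X → ℝ} (hF : Equicontinuous F) {a b : X → ℝ}
    (hab : ∀ n, F n ∈ Icc a b) :
    ∃ (φ : ℕ → ℕ) (f : X → ℝ), StrictMono φ ∧
      ∀ x, Tendsto (fun n => F (φ n) x) atTop (𝓝 (f x)) := by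
  obtain ⟨D, hD_countable, hD⟩ := TopologicalSpace.exists_countable_dense X
  have : Countable D := hD_countable.to_subtype
  obtain ⟨f, -, hf⟩ := (isCompact_Icc (a := a) (b := b)).exists_mapClusterPt (f := atTop) (u := F)
    (tendsto_principal.2 (Eventually.of_forall hab))
  have hf_closure : f ∈ closure (range F) :=
    mem_closure_iff_clusterPt.2 (hf.clusterPt.mono (tendsto_principal.2 (by simp)))
  have hf_cont : Continuous f :=
    (equicontinuous_iff_range.1 hF).closure.continuous ⟨f, hf_closure⟩
  obtain ⟨φ, hφ, hlim⟩ := (hf.tendsto_comp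
    (f := fun (g : X → ℝ) (x : D) => g x) (Continuous.tendsto (by fun_prop) f)).tendsto_subseq
  exact ⟨φ, f, hφ, fun x => (hF.comp φ x).tendsto_of_mem_closure hf_cont.continuousWithinAt
    (fun y hy => tendsto_pi_nhds.1 hlim ⟨y, hy⟩) (hD x)⟩

end Compactness

section Young

theorem rpow_mul_lt_of_ne {q v w : ℝ} (hq : 0 < q) (hv : 0 ≤ v) (hw : 0 ≤ w) (h : v ≠ w) :
    (q + 1) * (v ^ q * w) < q * v ^ (q + 1) + w ^ (q + 1) := by
  rcases hv.eq_or_lt with rfl | hv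
  · have := Real.rpow_pos_of_pos (lt_of_le_of_ne hw h) (q + 1)
    simpa [Real.zero_rpow hq.ne', Real.zero_rpow (by linarith : q + 1 ≠ 0)]
  · have hx : -1 ≤ w / v - 1 := by linarith [div_nonneg hw hv.le]
    have hx0 : w / v - 1 ≠ 0 := fun h0 => h ((div_eq_one_iff_eq hv.ne').1 (by linarith)).symm
    have hbernoulli := one_add_mul_self_lt_rpow_one_add hx hx0 (show 1 < q + 1 by linarith)
    rw [add_sub_cancel, Real.div_rpow hw hv.le, lt_div_iff₀ (by positivity)] at hbernoulli
    have hsucc : v ^ (q + 1) = v ^ q * v := Real.rpow_add_one hv.ne' q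
    calc (q + 1) * (v ^ q * w)
        = (1 + (q + 1) * (w / v - 1)) * v ^ (q + 1) + q * v ^ (q + 1) := by
          rw [hsucc]; field_simp; ring
      _ < q * v ^ (q + 1) + w ^ (q + 1) := by linarith

theorem rpow_mul_le {q v w : ℝ} (hq : 0 < q) (hv : 0 ≤ v) (hw : 0 ≤ w) :
    (q + 1) * (v ^ q * w) ≤ q * v ^ (q + 1) + w ^ (q + 1) := by
  rcases eq_or_ne v w with rfl | h
  · rw [Real.rpow_add_of_nonneg hv hq.le zero_le_one, Real.rpow_one]
    linarith
  · exact (rpow_mul_lt_of_ne hq hv hw h).le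

variable {X : Type*} [MeasurableSpace X] {μ : Measure X} {p : ℝ} {f g : X → ℝ}

theorem integrable_rpow_add_one (hp : 0 < p) (hf : MemLp f (ENNReal.ofReal (p + 1)) μ)
    (hf0 : 0 ≤ f) : Integrable (fun x => f x ^ (p + 1)) μ := by
  have := hf.integrable_norm_rpow (ENNReal.ofReal_pos.2 (by linarith)).ne' ENNReal.ofReal_ne_top
  simpa only [ENNReal.toReal_ofReal (by linarith : 0 ≤ p + 1), Real.norm_of_nonneg (hf0 _)]
    using this

theorem integrable_rpow_mul (hp : 0 < p) (hf : MemLp f (ENNReal.ofReal (p + 1)) μ) (hf0 : 0 ≤ f)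
    (hg : MemLp g (ENNReal.ofReal (p + 1)) μ) (hg0 : 0 ≤ g) :
    Integrable (fun x => f x ^ p * g x) μ := by
  have hdom := ((integrable_rpow_add_one hp hf hf0).const_mul p).add
    (integrable_rpow_add_one hp hg hg0)
  have hmeas : AEMeasurable (fun x => f x ^ p * g x) μ :=
    (hf.aestronglyMeasurable.aemeasurable.pow_const p).mul hg.aestronglyMeasurable.aemeasurable
  refine hdom.mono' hmeas.aestronglyMeasurable (ae_of_all _ fun x => ?_)
  have h0 : 0 ≤ f x ^ p * g x := mul_nonneg (Real.rpow_nonneg (hf0 x) p) (hg0 x)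
  rw [Real.norm_of_nonneg h0]
  exact (le_mul_of_one_le_left h0 (by linarith)).trans (rpow_mul_le hp (hf0 x) (hg0 x))

theorem ae_eq_of_integral_rpow_mul_ge (hp : 0 < p)
    (hf : MemLp f (ENNReal.ofReal (p + 1)) μ) (hf0 : 0 ≤ f)
    (hg : MemLp g (ENNReal.ofReal (p + 1)) μ) (hg0 : 0 ≤ g)
    (h : p * ∫ x, f x ^ (p + 1) ∂μ + ∫ x, g x ^ (p + 1) ∂μ ≤ (p + 1) * ∫ x, f x ^ p * g x ∂μ) :
    f =ᵐ[μ] g := by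
  have hf_int := (integrable_rpow_add_one hp hf hf0).const_mul p
  have hg_int := integrable_rpow_add_one hp hg hg0
  have hfg_int := (integrable_rpow_mul hp hf hf0 hg hg0).const_mul (p + 1)
  have hle : (fun x => (p + 1) * (f x ^ p * g x)) ≤ᵐ[μ]
      fun x => p * f x ^ (p + 1) + g x ^ (p + 1) :=
    ae_of_all _ fun x => rpow_mul_le hp (hf0 x) (hg0 x)
  have hintegral : ∫ x, (p + 1) * (f x ^ p * g x) ∂μ =
      ∫ x, (p * f x ^ (p + 1) + g x ^ (p + 1)) ∂μ := by
    refine (integral_mono_ae hfg_int (hf_int.add hg_int) hle).antisymm ?_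
    rwa [integral_add' hf_int hg_int, integral_const_mul, integral_const_mul]
  filter_upwards [(integral_eq_iff_of_ae_le hfg_int (hf_int.add hg_int) hle).1 hintegral] with x hx
  by_contra hne
  exact (rpow_mul_lt_of_ne hp (hf0 x) (hg0 x) hne).ne hx

theorem integral_rpow_mul_le (hp : 0 < p)
    (hf : MemLp f (ENNReal.ofReal (p + 1)) μ) (hf0 : 0 ≤ f) (hf1 : ∫ x, f x ^ (p + 1) ∂μ ≤ 1)
    (hg : MemLp g (ENNReal.ofReal (p + 1)) μ) (hg0 : 0 ≤ g) :
    ∫ x, f x ^ p * g x ∂μ ≤ (∫ x, g x ^ (p + 1) ∂μ) ^ (1 / (p + 1)) := by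
  have hconj : ((p + 1) / p).HolderConjugate (p + 1) := by
    rw [Real.holderConjugate_iff]
    exact ⟨by rw [lt_div_iff₀ hp]; linarith, by field_simp⟩
  have hfp : MemLp (fun x => f x ^ p) (ENNReal.ofReal ((p + 1) / p)) μ := by
    have := hf.norm_rpow_div (ENNReal.ofReal p)
    simpa only [ENNReal.toReal_ofReal hp.le, Real.norm_of_nonneg (hf0 _),
      ENNReal.ofReal_div_of_pos hp] using this
  have hpow (x : X) : (f x ^ p) ^ ((p + 1) / p) = f x ^ (p + 1) := by
    rw [← Real.rpow_mul (hf0 x), mul_div_cancel₀ _ hp.ne']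
  have hholder := integral_mul_le_Lp_mul_Lq_of_nonneg hconj
    (ae_of_all μ fun x => Real.rpow_nonneg (hf0 x) p) (ae_of_all μ hg0) hfp hg
  simp only [hpow] at hholder
  have hg_nonneg : 0 ≤ ∫ x, g x ^ (p + 1) ∂μ := integral_nonneg fun x => Real.rpow_nonneg (hg0 x) _
  have hf_nonneg : 0 ≤ ∫ x, f x ^ (p + 1) ∂μ := integral_nonneg fun x => Real.rpow_nonneg (hf0 x) _
  exact hholder.trans (mul_le_of_le_one_left (by positivity)
    (Real.rpow_le_one hf_nonneg hf1 (by positivity)))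

end Young

section Hammerstein

variable {X Y : Type*}

/-- The Hammerstein operator with kernel `k` and power nonlinearity `f ↦ f ^ p`. -/
def hammerstein [MeasurableSpace Y] (k : X → Y → ℝ) (μ : Measure Y) (p : ℝ) (f : Y → ℝ) (x : X) :
    ℝ :=
  ∫ y, k x y * f y ^ p ∂μ

variable [MeasurableSpace Y] {μ : Measure Y} {k : X → Y → ℝ} {p q : ℝ} {f : Y → ℝ}

theorem hammerstein_const_mul {c : ℝ} (hc : 0 ≤ c) (hf0 : 0 ≤ f) (x : X) :
    hammerstein k μ p (fun y => c * f y) x = c ^ p * hammerstein k μ p f x := by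
  simp only [hammerstein, Real.mul_rpow hc (hf0 _), ← integral_const_mul]
  congr! 2
  ring

theorem hammerstein_congr_ae {f₁ f₂ : Y → ℝ} (h : f₁ =ᵐ[μ] f₂) :
    hammerstein k μ p f₁ = hammerstein k μ p f₂ :=
  funext fun _ => integral_congr_ae (h.mono fun _ hy => by simp only [hy])

variable [MeasurableSpace X] {ν : Measure X} {ψ : X → ℝ} {φ : Y → ℝ} {g : X → ℝ} {x : X}

/-- A nonnegative measurable kernel bounded by a product of functions of one variable; the
product bound reduces all integrability questions to integrability against `ψ` and `φ`. -/
structure IsDominatedKernel (k : X → Y → ℝ) (ψ : X → ℝ) (φ : Y → ℝ) : Prop where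
  measurable : Measurable (Function.uncurry k)
  nonneg : ∀ x y, 0 ≤ k x y
  le_mul : ∀ x y, k x y ≤ ψ x * φ y

theorem IsDominatedKernel.swap (hk : IsDominatedKernel k ψ φ) :
    IsDominatedKernel (Function.swap k) φ ψ where
  measurable := hk.measurable.comp measurable_swap
  nonneg y x := hk.nonneg x y
  le_mul y x := (hk.le_mul x y).trans_eq (mul_comm _ _)

theorem IsDominatedKernel.mul_rpow_le (hk : IsDominatedKernel k ψ φ) (hf0 : 0 ≤ f) (x : X) (y : Y) :
    k x y * f y ^ p ≤ ψ x * (f y ^ p * φ y) :=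
  (mul_le_mul_of_nonneg_right (hk.le_mul x y) (Real.rpow_nonneg (hf0 y) p)).trans_eq (by ring)

theorem IsDominatedKernel.mul_rpow_nonneg (hk : IsDominatedKernel k ψ φ) (hf0 : 0 ≤ f)
    (x : X) (y : Y) : 0 ≤ k x y * f y ^ p :=
  mul_nonneg (hk.nonneg x y) (Real.rpow_nonneg (hf0 y) p)

theorem IsDominatedKernel.integrable_mul_rpow (hk : IsDominatedKernel k ψ φ)
    (hf : AEMeasurable f μ) (hf0 : 0 ≤ f) (hI : Integrable (fun y => f y ^ p * φ y) μ) (x : X) :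
    Integrable (fun y => k x y * f y ^ p) μ := by
  have hmeas : AEMeasurable (fun y => k x y * f y ^ p) μ :=
    hk.measurable.of_uncurry_left.aemeasurable.mul (hf.pow_const p)
  refine (hI.const_mul (ψ x)).mono' hmeas.aestronglyMeasurable (ae_of_all _ fun y => ?_)
  rw [Real.norm_of_nonneg (hk.mul_rpow_nonneg hf0 x y)]
  exact hk.mul_rpow_le hf0 x y

theorem hammerstein_nonneg (hk : IsDominatedKernel k ψ φ) (hf0 : 0 ≤ f) :
    0 ≤ hammerstein k μ p f :=
  fun x => integral_nonneg (hk.mul_rpow_nonneg hf0 x)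

theorem hammerstein_le (hk : IsDominatedKernel k ψ φ) (hf : AEMeasurable f μ) (hf0 : 0 ≤ f)
    (hI : Integrable (fun y => f y ^ p * φ y) μ) (x : X) :
    hammerstein k μ p f x ≤ ψ x * ∫ y, f y ^ p * φ y ∂μ := by
  rw [← integral_const_mul]
  exact integral_mono (hk.integrable_mul_rpow hf hf0 hI x) (hI.const_mul _) (hk.mul_rpow_le hf0 x)

theorem aestronglyMeasurable_hammerstein [SFinite μ] (hk : IsDominatedKernel k ψ φ)
    (hf : AEMeasurable f μ) : AEStronglyMeasurable (hammerstein k μ p f) ν :=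
  have hmeas : AEMeasurable (fun z : X × Y => k z.1 z.2 * f z.2 ^ p) (ν.prod μ) :=
    hk.measurable.aemeasurable.mul (hf.comp_snd.pow_const p)
  hmeas.aestronglyMeasurable.integral_prod_right'

theorem hammerstein_pos (hk : IsDominatedKernel k ψ φ) (hf : AEMeasurable f μ) (hf0 : 0 ≤ f)
    (hI : Integrable (fun y => f y ^ p * φ y) μ) (hk_pos : ∀ᵐ y ∂μ, 0 < k x y)
    (hf_ne : ¬ f =ᵐ[μ] 0) : 0 < hammerstein k μ p f x := by
  refine (hammerstein_nonneg hk hf0 x).lt_of_ne' fun hzero => hf_ne ?_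
  have hae := (integral_eq_zero_iff_of_nonneg (hk.mul_rpow_nonneg hf0 x)
    (hk.integrable_mul_rpow hf hf0 hI x)).1 hzero
  filter_upwards [hae, hk_pos] with y hy hky
  by_contra hfy
  exact (mul_pos hky (Real.rpow_pos_of_pos ((hf0 y).lt_of_ne' hfy) p)).ne' hy

theorem integral_rpow_mul_hammerstein [SFinite μ] [SFinite ν] (hk : IsDominatedKernel k ψ φ)
    (hf : AEMeasurable f μ) (hf0 : 0 ≤ f) (hfI : Integrable (fun y => f y ^ p * φ y) μ)
    (hg : AEMeasurable g ν) (hg0 : 0 ≤ g) (hgI : Integrable (fun x => g x ^ q * ψ x) ν) :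
    ∫ x, g x ^ q * hammerstein k μ p f x ∂ν =
      ∫ y, f y ^ p * hammerstein (Function.swap k) ν q g y ∂μ := by
  have hint : Integrable (Function.uncurry fun x y => g x ^ q * (k x y * f y ^ p)) (ν.prod μ) := by
    have hmeas : AEMeasurable (Function.uncurry fun x y => g x ^ q * (k x y * f y ^ p))
        (ν.prod μ) :=
      (hg.comp_fst.pow_const q).mul (hk.measurable.aemeasurable.mul (hf.comp_snd.pow_const p))
    refine (hgI.mul_prod hfI).mono' hmeas.aestronglyMeasurable (ae_of_all _ fun ⟨x, y⟩ => ?_)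
    have hgx := Real.rpow_nonneg (hg0 x) q
    rw [Function.uncurry_apply_pair,
      Real.norm_of_nonneg (mul_nonneg hgx (hk.mul_rpow_nonneg hf0 x y))]
    exact (mul_le_mul_of_nonneg_left (hk.mul_rpow_le hf0 x y) hgx).trans_eq (by ring)
  calc ∫ x, g x ^ q * hammerstein k μ p f x ∂ν
      = ∫ x, ∫ y, g x ^ q * (k x y * f y ^ p) ∂μ ∂ν := by
        simp only [hammerstein, integral_const_mul]
    _ = ∫ y, ∫ x, g x ^ q * (k x y * f y ^ p) ∂ν ∂μ := integral_integral_swap hint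
    _ = ∫ y, f y ^ p * hammerstein (Function.swap k) ν q g y ∂μ := by
        simp only [hammerstein, ← integral_const_mul, Function.swap]
        congr! 4
        ring

theorem dist_hammerstein_le {X : Type*} [PseudoMetricSpace X] [MeasurableSpace X] {k : X → Y → ℝ}
    {ψ : X → ℝ} (hk : IsDominatedKernel k ψ φ)
    (hk_lip : ∀ x x' y, |k x y - k x' y| ≤ φ y * dist x x') (hf : AEMeasurable f μ) (hf0 : 0 ≤ f)
    (hI : Integrable (fun y => f y ^ p * φ y) μ) (x x' : X) :
    dist (hammerstein k μ p f x) (hammerstein k μ p f x') ≤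
      (∫ y, f y ^ p * φ y ∂μ) * dist x x' := by
  rw [Real.dist_eq, hammerstein, hammerstein, ← integral_sub (hk.integrable_mul_rpow hf hf0 hI x)
    (hk.integrable_mul_rpow hf hf0 hI x'), ← integral_mul_const, ← Real.norm_eq_abs]
  refine norm_integral_le_of_norm_le (hI.mul_const _) (ae_of_all _ fun y => ?_)
  rw [← sub_mul, norm_mul, Real.norm_eq_abs, Real.norm_of_nonneg (Real.rpow_nonneg (hf0 y) p)]
  exact (mul_le_mul_of_nonneg_right (hk_lip x x' y) (Real.rpow_nonneg (hf0 y) p)).trans_eq (by ring)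

end Hammerstein

section Maximizer

open scoped Topology

theorem memLp_of_nonneg_of_le_const_mul {X : Type*} [MeasurableSpace X] {ν : Measure X}
    {r : ENNReal} {ψ w : X → ℝ} {C : ℝ} (hψ : MemLp ψ r ν) (hψ0 : 0 ≤ ψ)
    (hw : AEStronglyMeasurable w ν) (hw0 : 0 ≤ w) (hle : ∀ x, w x ≤ C * ψ x) : MemLp w r ν := by
  refine hψ.of_le_mul (c := C) hw (ae_of_all _ fun x => ?_)
  rw [Real.norm_of_nonneg (hw0 x), Real.norm_of_nonneg (hψ0 x)]
  exact hle x

theorem tendsto_integral_rpow_add_one {X : Type*} [MeasurableSpace X] {ν : Measure X} {q C : ℝ}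
    {ψ v : X → ℝ} {w : ℕ → X → ℝ} (hq : 0 < q)
    (hψ : MemLp ψ (ENNReal.ofReal (q + 1)) ν) (hψ0 : 0 ≤ ψ) (hC : 0 ≤ C)
    (hw : ∀ n, AEStronglyMeasurable (w n) ν) (hw0 : ∀ n, 0 ≤ w n)
    (hle : ∀ n x, w n x ≤ C * ψ x) (hlim : ∀ x, Tendsto (fun n => w n x) atTop (𝓝 (v x))) :
    Tendsto (fun n => ∫ x, w n x ^ (q + 1) ∂ν) atTop (𝓝 (∫ x, v x ^ (q + 1) ∂ν)) := by
  have hψI := integrable_rpow_add_one hq (hψ.const_mul C) fun x => mul_nonneg hC (hψ0 x)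
  refine tendsto_integral_of_dominated_convergence _
    (fun n => ((hw n).aemeasurable.pow_const _).aestronglyMeasurable) hψI
    (fun n => ae_of_all _ fun x => ?_)
    (ae_of_all _ fun x => (hlim x).rpow_const (Or.inr (by linarith)))
  rw [Real.norm_of_nonneg (Real.rpow_nonneg (hw0 n x) _)]
  exact Real.rpow_le_rpow (hw0 n x) (hle n x) (by linarith)

variable {X Y : Type*} [MeasurableSpace X] [MeasurableSpace Y] {μ : Measure Y} {ν : Measure X}
  {k : X → Y → ℝ} {ψ : X → ℝ} {φ : Y → ℝ} {p q : ℝ}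

/-- The nonnegative functions in the closed unit ball of `L^(p+1)(μ)`: the constraint set of the
variational problem. -/
def nonnegUnitBall (μ : Measure Y) (p : ℝ) : Set (Y → ℝ) :=
  {f | MemLp f (ENNReal.ofReal (p + 1)) μ ∧ 0 ≤ f ∧ ∫ y, f y ^ (p + 1) ∂μ ≤ 1}

theorem hammerstein_le_of_mem_nonnegUnitBall (hk : IsDominatedKernel k ψ φ) (hp : 0 < p)
    (hφ : MemLp φ (ENNReal.ofReal (p + 1)) μ) (hφ0 : 0 ≤ φ) (hψ0 : 0 ≤ ψ) {f : Y → ℝ}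
    (hf : f ∈ nonnegUnitBall μ p) (x : X) :
    hammerstein k μ p f x ≤ (∫ y, φ y ^ (p + 1) ∂μ) ^ (1 / (p + 1)) * ψ x := by
  obtain ⟨hf, hf0, hf1⟩ := hf
  calc hammerstein k μ p f x ≤ ψ x * ∫ y, f y ^ p * φ y ∂μ :=
        hammerstein_le hk hf.aemeasurable hf0 (integrable_rpow_mul hp hf hf0 hφ hφ0) x
    _ ≤ ψ x * (∫ y, φ y ^ (p + 1) ∂μ) ^ (1 / (p + 1)) :=
        mul_le_mul_of_nonneg_left (integral_rpow_mul_le hp hf hf0 hf1 hφ hφ0) (hψ0 x)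
    _ = _ := mul_comm _ _

theorem memLp_hammerstein [SFinite μ] (hk : IsDominatedKernel k ψ φ) (hp : 0 < p)
    (hφ : MemLp φ (ENNReal.ofReal (p + 1)) μ) (hφ0 : 0 ≤ φ) {r : ENNReal} (hψ : MemLp ψ r ν)
    (hψ0 : 0 ≤ ψ) {f : Y → ℝ} (hf : MemLp f (ENNReal.ofReal (p + 1)) μ) (hf0 : 0 ≤ f) :
    MemLp (hammerstein k μ p f) r ν :=
  memLp_of_nonneg_of_le_const_mul hψ hψ0 (aestronglyMeasurable_hammerstein hk hf.aemeasurable)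
    (hammerstein_nonneg hk hf0) fun x =>
      (hammerstein_le hk hf.aemeasurable hf0 (integrable_rpow_mul hp hf hf0 hφ hφ0) x).trans_eq
        (mul_comm _ _)

theorem zero_mem_nonnegUnitBall (hp : 0 < p) : (0 : Y → ℝ) ∈ nonnegUnitBall μ p :=
  ⟨MemLp.zero, le_rfl, by simp [Real.zero_rpow (by linarith : p + 1 ≠ 0)]⟩

theorem inv_mul_mem_nonnegUnitBall {u : Y → ℝ} (hu : MemLp u (ENNReal.ofReal (p + 1)) μ)
    (hu0 : 0 ≤ u) {l : ℝ} (hl : 0 < l)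
    (hul : ∫ y, u y ^ (p + 1) ∂μ = l ^ (p + 1)) :
    (fun y => l⁻¹ * u y) ∈ nonnegUnitBall μ p := by
  refine ⟨hu.const_mul _, fun y => mul_nonneg (inv_nonneg.2 hl.le) (hu0 y), ?_⟩
  have hpow (y : Y) : (l⁻¹ * u y) ^ (p + 1) = (l ^ (p + 1))⁻¹ * u y ^ (p + 1) := by
    rw [Real.mul_rpow (inv_nonneg.2 hl.le) (hu0 y), Real.inv_rpow hl.le]
  simp only [hpow]
  rw [integral_const_mul, hul, inv_mul_cancel₀ (by positivity)]

theorem equicontinuous_hammerstein {X ι : Type*} [PseudoMetricSpace X] [MeasurableSpace X]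
    {k : X → Y → ℝ} {ψ : X → ℝ} (hk : IsDominatedKernel k ψ φ)
    (hk_lip : ∀ x x' y, |k x y - k x' y| ≤ φ y * dist x x') (hp : 0 < p)
    (hφ : MemLp φ (ENNReal.ofReal (p + 1)) μ) (hφ0 : 0 ≤ φ) {f : ι → Y → ℝ}
    (hf : ∀ i, f i ∈ nonnegUnitBall μ p) : Equicontinuous fun i => hammerstein k μ p (f i) := by
  refine equicontinuous_of_continuity_modulus
    (fun d => (∫ y, φ y ^ (p + 1) ∂μ) ^ (1 / (p + 1)) * d) ?_ _ fun x y i => ?_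
  · exact Continuous.tendsto' (by fun_prop) _ _ (mul_zero _)
  · obtain ⟨hfi, hfi0, hfi1⟩ := hf i
    exact (dist_hammerstein_le hk hk_lip hfi.aemeasurable hfi0
      (integrable_rpow_mul hp hfi hfi0 hφ hφ0) x y).trans
      (mul_le_mul_of_nonneg_right (integral_rpow_mul_le hp hfi hfi0 hfi1 hφ hφ0) dist_nonneg)

theorem bddAbove_integral_hammerstein_rpow [SFinite μ] (hk : IsDominatedKernel k ψ φ) (hp : 0 < p)
    (hq : 0 < q) (hφ : MemLp φ (ENNReal.ofReal (p + 1)) μ) (hφ0 : 0 ≤ φ)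
    (hψ : MemLp ψ (ENNReal.ofReal (q + 1)) ν) (hψ0 : 0 ≤ ψ) :
    BddAbove ((fun g => ∫ x, hammerstein k μ p g x ^ (q + 1) ∂ν) '' nonnegUnitBall μ p) := by
  set C := (∫ y, φ y ^ (p + 1) ∂μ) ^ (1 / (p + 1))
  have hC : 0 ≤ C :=
    Real.rpow_nonneg (integral_nonneg fun y => Real.rpow_nonneg (hφ0 y) _) _
  refine ⟨∫ x, (C * ψ x) ^ (q + 1) ∂ν, forall_mem_image.2 fun g hg => ?_⟩
  have hH := memLp_hammerstein hk hp hφ hφ0 hψ hψ0 hg.1 hg.2.1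
  have hH0 := hammerstein_nonneg (μ := μ) (p := p) hk hg.2.1
  refine integral_mono (integrable_rpow_add_one hq hH hH0) (integrable_rpow_add_one hq
    (hψ.const_mul C) fun x => mul_nonneg hC (hψ0 x)) fun x => ?_
  exact Real.rpow_le_rpow (hH0 x) (hammerstein_le_of_mem_nonnegUnitBall hk hp hφ hφ0 hψ0 hg x)
    (by linarith)

theorem exists_maximizing_hammerstein_limit [SFinite μ] {X : Type*} [PseudoMetricSpace X]
    [TopologicalSpace.SeparableSpace X] [MeasurableSpace X] {ν : Measure X} {k : X → Y → ℝ}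
    {ψ : X → ℝ} (hk : IsDominatedKernel k ψ φ)
    (hk_lip : ∀ x x' y, |k x y - k x' y| ≤ φ y * dist x x') (hp : 0 < p) (hq : 0 < q)
    (hφ : MemLp φ (ENNReal.ofReal (p + 1)) μ) (hφ0 : 0 ≤ φ)
    (hψ : MemLp ψ (ENNReal.ofReal (q + 1)) ν) (hψ0 : 0 ≤ ψ) :
    ∃ (f : ℕ → Y → ℝ) (v : X → ℝ), (∀ n, f n ∈ nonnegUnitBall μ p) ∧
      (∀ x, Tendsto (fun n => hammerstein k μ p (f n) x) atTop (𝓝 (v x))) ∧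
      ∀ g ∈ nonnegUnitBall μ p,
        ∫ x, hammerstein k μ p g x ^ (q + 1) ∂ν ≤ ∫ x, v x ^ (q + 1) ∂ν := by
  set C := (∫ y, φ y ^ (p + 1) ∂μ) ^ (1 / (p + 1))
  have hC : 0 ≤ C :=
    Real.rpow_nonneg (integral_nonneg fun y => Real.rpow_nonneg (hφ0 y) _) _
  have hle {g : Y → ℝ} (hg : g ∈ nonnegUnitBall μ p) (x : X) :
      hammerstein k μ p g x ≤ C * ψ x :=
    hammerstein_le_of_mem_nonnegUnitBall hk hp hφ hφ0 hψ0 hg x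
  set J : (Y → ℝ) → ℝ := fun g => ∫ x, hammerstein k μ p g x ^ (q + 1) ∂ν
  have hJ_bdd : BddAbove (J '' nonnegUnitBall μ p) :=
    bddAbove_integral_hammerstein_rpow hk hp hq hφ hφ0 hψ hψ0
  obtain ⟨s, -, hs_lim, hs_mem⟩ := exists_seq_tendsto_sSup
    ⟨J 0, mem_image_of_mem J (zero_mem_nonnegUnitBall hp)⟩ hJ_bdd
  choose f hf hfs using hs_mem
  obtain ⟨σ, v, hσ, hv⟩ := exists_subseq_tendsto_of_equicontinuous
    (equicontinuous_hammerstein hk hk_lip hp hφ hφ0 hf) (a := 0) (b := fun x => C * ψ x)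
    fun n => ⟨hammerstein_nonneg hk (hf n).2.1, hle (hf n)⟩
  have hJ_lim : Tendsto (fun n => J (f (σ n))) atTop (𝓝 (∫ x, v x ^ (q + 1) ∂ν)) :=
    tendsto_integral_rpow_add_one hq hψ hψ0 hC
      (fun n => aestronglyMeasurable_hammerstein hk (hf (σ n)).1.aemeasurable)
      (fun n => hammerstein_nonneg hk (hf (σ n)).2.1) (fun n => hle (hf (σ n))) hv
  have hsup : ∫ x, v x ^ (q + 1) ∂ν = sSup (J '' nonnegUnitBall μ p) := by
    simp only [hfs] at hJ_lim
    exact tendsto_nhds_unique hJ_lim (hs_lim.comp hσ.tendsto_atTop)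
  exact ⟨fun n => f (σ n), v, fun n => hf (σ n), hv, fun g hg =>
    hsup ▸ le_csSup hJ_bdd (mem_image_of_mem J hg)⟩

section Limit

variable {f : ℕ → Y → ℝ} {v : X → ℝ}

theorem nonneg_of_hammerstein_limit (hk : IsDominatedKernel k ψ φ) (hf0 : ∀ n, 0 ≤ f n)
    (hv : ∀ x, Tendsto (fun n => hammerstein k μ p (f n) x) atTop (𝓝 (v x))) : 0 ≤ v :=
  fun x => ge_of_tendsto' (hv x) fun n => hammerstein_nonneg hk (hf0 n) x

variable [SFinite μ]

theorem memLp_of_hammerstein_limit (hk : IsDominatedKernel k ψ φ) (hp : 0 < p)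
    (hφ : MemLp φ (ENNReal.ofReal (p + 1)) μ) (hφ0 : 0 ≤ φ) {r : ENNReal}
    (hψ : MemLp ψ r ν) (hψ0 : 0 ≤ ψ) (hf : ∀ n, f n ∈ nonnegUnitBall μ p)
    (hv : ∀ x, Tendsto (fun n => hammerstein k μ p (f n) x) atTop (𝓝 (v x))) : MemLp v r ν :=
  memLp_of_nonneg_of_le_const_mul hψ hψ0
    (aestronglyMeasurable_of_tendsto_ae atTop
      (fun n => aestronglyMeasurable_hammerstein hk (hf n).1.aemeasurable) (ae_of_all _ hv))
    (nonneg_of_hammerstein_limit hk (fun n => (hf n).2.1) hv)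
    fun x => le_of_tendsto' (hv x) fun n =>
      hammerstein_le_of_mem_nonnegUnitBall hk hp hφ hφ0 hψ0 (hf n) x

variable [SFinite ν]

theorem integral_rpow_le_of_hammerstein_limit (hk : IsDominatedKernel k ψ φ) (hp : 0 < p)
    (hq : 0 < q) (hφ : MemLp φ (ENNReal.ofReal (p + 1)) μ) (hφ0 : 0 ≤ φ)
    (hψ : MemLp ψ (ENNReal.ofReal (q + 1)) ν) (hψ0 : 0 ≤ ψ) (hf : ∀ n, f n ∈ nonnegUnitBall μ p)
    (hv : ∀ x, Tendsto (fun n => hammerstein k μ p (f n) x) atTop (𝓝 (v x))) :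
    ∫ x, v x ^ (q + 1) ∂ν ≤
      (∫ y, hammerstein (Function.swap k) ν q v y ^ (p + 1) ∂μ) ^ (1 / (p + 1)) := by
  set C := (∫ y, φ y ^ (p + 1) ∂μ) ^ (1 / (p + 1))
  have hv0 := nonneg_of_hammerstein_limit hk (fun n => (hf n).2.1) hv
  have hvL := memLp_of_hammerstein_limit hk hp hφ hφ0 hψ hψ0 hf hv
  have hvψ := integrable_rpow_mul hq hvL hv0 hψ hψ0
  have hu := memLp_hammerstein hk.swap hq hψ hψ0 hφ hφ0 hvL hv0
  have hu0 : 0 ≤ hammerstein (Function.swap k) ν q v := hammerstein_nonneg hk.swap hv0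
  have hlim : Tendsto (fun n => ∫ x, v x ^ q * hammerstein k μ p (f n) x ∂ν) atTop
      (𝓝 (∫ x, v x ^ q * v x ∂ν)) := by
    refine tendsto_integral_of_dominated_convergence _ (fun n =>
      ((hvL.aemeasurable.pow_const q).mul (aestronglyMeasurable_hammerstein hk
        (hf n).1.aemeasurable).aemeasurable).aestronglyMeasurable) (hvψ.const_mul C)
      (fun n => ae_of_all _ fun x => ?_) (ae_of_all _ fun x => (hv x).const_mul _)
    have hvx := Real.rpow_nonneg (hv0 x) q
    rw [Real.norm_of_nonneg (mul_nonneg hvx (hammerstein_nonneg hk (hf n).2.1 x))]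
    have hle := hammerstein_le_of_mem_nonnegUnitBall hk hp hφ hφ0 hψ0 (hf n) x
    exact (mul_le_mul_of_nonneg_left hle hvx).trans_eq (mul_left_comm _ _ _)
  have hpow (x : X) : v x ^ (q + 1) = v x ^ q * v x := by
    rw [Real.rpow_add_of_nonneg (hv0 x) hq.le zero_le_one, Real.rpow_one]
  simp only [hpow]
  refine le_of_tendsto' hlim fun n => ?_
  obtain ⟨hfn, hfn0, hfn1⟩ := hf n
  rw [integral_rpow_mul_hammerstein hk hfn.aemeasurable hfn0
    (integrable_rpow_mul hp hfn hfn0 hφ hφ0) hvL.aemeasurable hv0 hvψ]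
  exact integral_rpow_mul_le hp hfn hfn0 hfn1 hu hu0

theorem integral_rpow_mul_hammerstein_inv_mul (hk : IsDominatedKernel k ψ φ) (hp : 0 < p)
    (hq : 0 < q) (hφ : MemLp φ (ENNReal.ofReal (p + 1)) μ) (hφ0 : 0 ≤ φ)
    (hψ : MemLp ψ (ENNReal.ofReal (q + 1)) ν) (hψ0 : 0 ≤ ψ)
    (hv : MemLp v (ENNReal.ofReal (q + 1)) ν) (hv0 : 0 ≤ v) {l : ℝ} (hl : 0 < l)
    (hul : ∫ y, hammerstein (Function.swap k) ν q v y ^ (p + 1) ∂μ = l ^ (p + 1)) :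
    ∫ x, v x ^ q * hammerstein k μ p
      (fun y => l⁻¹ * hammerstein (Function.swap k) ν q v y) x ∂ν = l := by
  set u := hammerstein (Function.swap k) ν q v
  have hu0 : 0 ≤ u := hammerstein_nonneg hk.swap hv0
  obtain ⟨hg, hg0, -⟩ := inv_mul_mem_nonnegUnitBall
    (memLp_hammerstein hk.swap hq hψ hψ0 hφ hφ0 hv hv0) hu0 hl hul
  have hpow (y : Y) : (l⁻¹ * u y) ^ p * u y = (l ^ p)⁻¹ * u y ^ (p + 1) := by
    rw [Real.mul_rpow (inv_nonneg.2 hl.le) (hu0 y), Real.inv_rpow hl.le,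
      Real.rpow_add_of_nonneg (hu0 y) hp.le zero_le_one, Real.rpow_one, mul_assoc]
  calc ∫ x, v x ^ q * hammerstein k μ p (fun y => l⁻¹ * u y) x ∂ν
      = ∫ y, (l⁻¹ * u y) ^ p * u y ∂μ :=
        integral_rpow_mul_hammerstein hk hg.aemeasurable hg0
          (integrable_rpow_mul hp hg hg0 hφ hφ0) hv.aemeasurable hv0
          (integrable_rpow_mul hq hv hv0 hψ hψ0)
    _ = (l ^ p)⁻¹ * l ^ (p + 1) := by simp only [hpow, integral_const_mul, hul]
    _ = l := by rw [Real.rpow_add_one hl.ne', inv_mul_cancel_left₀ (by positivity)]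

/-- Testing the maximizing limit `v` against the normalization of its dual potential `u` turns
Young's inequality into an equality. -/
theorem ae_eq_hammerstein_of_maximizing_limit (hk : IsDominatedKernel k ψ φ) (hp : 0 < p)
    (hq : 0 < q) (hφ : MemLp φ (ENNReal.ofReal (p + 1)) μ) (hφ0 : 0 ≤ φ)
    (hψ : MemLp ψ (ENNReal.ofReal (q + 1)) ν) (hψ0 : 0 ≤ ψ) (hf : ∀ n, f n ∈ nonnegUnitBall μ p)
    (hv : ∀ x, Tendsto (fun n => hammerstein k μ p (f n) x) atTop (𝓝 (v x)))
    (hmax : ∀ g ∈ nonnegUnitBall μ p,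
      ∫ x, hammerstein k μ p g x ^ (q + 1) ∂ν ≤ ∫ x, v x ^ (q + 1) ∂ν)
    (hpos : 0 < ∫ x, v x ^ (q + 1) ∂ν) :
    ∃ l > 0, v =ᵐ[ν] hammerstein k μ p fun y => l⁻¹ * hammerstein (Function.swap k) ν q v y := by
  set u := hammerstein (Function.swap k) ν q v
  set l := (∫ y, u y ^ (p + 1) ∂μ) ^ (1 / (p + 1))
  have hSl : ∫ x, v x ^ (q + 1) ∂ν ≤ l :=
    integral_rpow_le_of_hammerstein_limit hk hp hq hφ hφ0 hψ hψ0 hf hv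
  have hl : 0 < l := hpos.trans_le hSl
  have hv0 := nonneg_of_hammerstein_limit hk (fun n => (hf n).2.1) hv
  have hvL := memLp_of_hammerstein_limit hk hp hφ hφ0 hψ hψ0 hf hv
  have hu := memLp_hammerstein hk.swap hq hψ hψ0 hφ hφ0 hvL hv0
  have hu0 : 0 ≤ u := hammerstein_nonneg hk.swap hv0
  have hul : ∫ y, u y ^ (p + 1) ∂μ = l ^ (p + 1) := by
    rw [← Real.rpow_mul (integral_nonneg fun y => Real.rpow_nonneg (hu0 y) _),
      one_div_mul_cancel (by linarith), Real.rpow_one]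
  obtain ⟨hg, hg0, hg1⟩ := inv_mul_mem_nonnegUnitBall hu hu0 hl hul
  have hmax_g := hmax _ ⟨hg, hg0, hg1⟩
  refine ⟨l, hl, ae_eq_of_integral_rpow_mul_ge hq hvL hv0
    (memLp_hammerstein hk hp hφ hφ0 hψ hψ0 hg hg0) (hammerstein_nonneg hk hg0) ?_⟩
  rw [integral_rpow_mul_hammerstein_inv_mul hk hp hq hφ hφ0 hψ hψ0 hvL hv0 hl hul]
  nlinarith

end Limit

section System

theorem integral_rpow_add_one_pos {f : Y → ℝ} (hp : 0 < p)
    (hf : MemLp f (ENNReal.ofReal (p + 1)) μ) (hf0 : 0 ≤ f) (hf_ne : ¬ f =ᵐ[μ] 0) :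
    0 < ∫ y, f y ^ (p + 1) ∂μ := by
  have hpow0 (y : Y) : 0 ≤ f y ^ (p + 1) := Real.rpow_nonneg (hf0 y) _
  have hint := integrable_rpow_add_one hp hf hf0
  refine (integral_nonneg hpow0).lt_of_ne' fun hzero => hf_ne ?_
  filter_upwards [(integral_eq_zero_iff_of_nonneg hpow0 hint).1 hzero] with y hy
  exact (Real.rpow_eq_zero (hf0 y) (by linarith)).1 hy

variable [SFinite μ] [NeZero μ] [NeZero ν]

theorem exists_mem_nonnegUnitBall_integral_hammerstein_pos (hk : IsDominatedKernel k ψ φ)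
    (hk_pos : ∀ᵐ x ∂ν, ∀ᵐ y ∂μ, 0 < k x y) (hp : 0 < p) (hq : 0 < q)
    (hφ : MemLp φ (ENNReal.ofReal (p + 1)) μ) (hφ0 : 0 ≤ φ)
    (hψ : MemLp ψ (ENNReal.ofReal (q + 1)) ν) (hψ0 : 0 ≤ ψ) :
    ∃ g ∈ nonnegUnitBall μ p, 0 < ∫ x, hammerstein k μ p g x ^ (q + 1) ∂ν := by
  have hφ_ne : ¬ φ =ᵐ[μ] 0 := fun hφ_zero => by
    obtain ⟨x, hx⟩ := hk_pos.exists
    obtain ⟨y, hxy, hy⟩ := (hx.and hφ_zero).exists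
    exact absurd (hk.le_mul x y) (by simpa [hy] using hxy)
  have hφ_pos := integral_rpow_add_one_pos hp hφ hφ0 hφ_ne
  set l := (∫ y, φ y ^ (p + 1) ∂μ) ^ (1 / (p + 1))
  have hl : 0 < l := by positivity
  have hφl : ∫ y, φ y ^ (p + 1) ∂μ = l ^ (p + 1) := by
    rw [← Real.rpow_mul hφ_pos.le, one_div_mul_cancel (by linarith), Real.rpow_one]
  have hg := inv_mul_mem_nonnegUnitBall hφ hφ0 hl hφl
  refine ⟨_, hg, integral_rpow_add_one_pos hq (memLp_hammerstein hk hp hφ hφ0 hψ hψ0 hg.1 hg.2.1)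
    (hammerstein_nonneg hk hg.2.1) fun hzero => ?_⟩
  obtain ⟨x, hx, hHx⟩ := (hk_pos.and hzero).exists
  refine (hammerstein_pos hk hg.1.aemeasurable hg.2.1
    (integrable_rpow_mul hp hg.1 hg.2.1 hφ hφ0) hx fun hg_zero => hφ_ne ?_).ne' hHx
  exact hg_zero.mono fun y hy => (mul_eq_zero_iff_left (inv_ne_zero hl.ne')).1 hy

variable {X : Type*} [PseudoMetricSpace X] [TopologicalSpace.SeparableSpace X] [MeasurableSpace X]
  {ν : Measure X} [SFinite ν] [NeZero ν] {k : X → Y → ℝ} {ψ : X → ℝ}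

theorem exists_hammerstein_eigenpair (hk : IsDominatedKernel k ψ φ)
    (hk_lip : ∀ x x' y, |k x y - k x' y| ≤ φ y * dist x x')
    (hk_pos : ∀ᵐ x ∂ν, ∀ᵐ y ∂μ, 0 < k x y) (hp : 0 < p) (hq : 0 < q)
    (hφ : MemLp φ (ENNReal.ofReal (p + 1)) μ) (hφ0 : 0 ≤ φ)
    (hψ : MemLp ψ (ENNReal.ofReal (q + 1)) ν) (hψ0 : 0 ≤ ψ) :
    ∃ (u : Y → ℝ) (w : X → ℝ) (l : ℝ), 0 < l ∧ MemLp u (ENNReal.ofReal (p + 1)) μ ∧ 0 ≤ u ∧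
      MemLp w (ENNReal.ofReal (q + 1)) ν ∧ 0 ≤ w ∧ ¬ u =ᵐ[μ] 0 ∧
      (w = hammerstein k μ p fun y => l * u y) ∧ u = hammerstein (Function.swap k) ν q w := by
  obtain ⟨f, v, hf, hv, hmax⟩ := exists_maximizing_hammerstein_limit hk hk_lip hp hq hφ hφ0 hψ hψ0
  obtain ⟨g, hg, hg_pos⟩ :=
    exists_mem_nonnegUnitBall_integral_hammerstein_pos hk hk_pos hp hq hφ hφ0 hψ hψ0
  have hpos := hg_pos.trans_le (hmax g hg)
  obtain ⟨l, hl, hvw⟩ :=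
    ae_eq_hammerstein_of_maximizing_limit hk hp hq hφ hφ0 hψ hψ0 hf hv hmax hpos
  have hv0 := nonneg_of_hammerstein_limit hk (fun n => (hf n).2.1) hv
  have hvL := memLp_of_hammerstein_limit hk hp hφ hφ0 hψ hψ0 hf hv
  have hu := memLp_hammerstein hk.swap hq hψ hψ0 hφ hφ0 hvL hv0
  have hu0 : 0 ≤ hammerstein (Function.swap k) ν q v := hammerstein_nonneg hk.swap hv0
  set u := hammerstein (Function.swap k) ν q v
  refine ⟨u, _, l⁻¹, inv_pos.2 hl, hu, hu0, hvL.ae_eq hvw,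
    hammerstein_nonneg hk fun y => mul_nonneg (inv_nonneg.2 hl.le) (hu0 y), fun hu_zero => ?_, rfl,
    hammerstein_congr_ae hvw⟩
  refine hpos.ne' (integral_eq_zero_of_ae (hvw.mono fun x hx => ?_))
  have hw_zero : hammerstein k μ p (fun y => l⁻¹ * u y) x = 0 :=
    integral_eq_zero_of_ae (hu_zero.mono fun y hy => by simp [hy, Real.zero_rpow hp.ne'])
  simp [hx, hw_zero, Real.zero_rpow (by linarith : q + 1 ≠ 0)]

theorem exists_hammerstein_system (hk : IsDominatedKernel k ψ φ)
    (hk_lip : ∀ x x' y, |k x y - k x' y| ≤ φ y * dist x x')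
    (hk_pos : ∀ᵐ x ∂ν, ∀ᵐ y ∂μ, 0 < k x y) (hp : 0 < p) (hq : 0 < q) (hpq : p * q ≠ 1)
    (hφ : MemLp φ (ENNReal.ofReal (p + 1)) μ) (hφ0 : 0 ≤ φ)
    (hψ : MemLp ψ (ENNReal.ofReal (q + 1)) ν) (hψ0 : 0 ≤ ψ) :
    ∃ (u : Y → ℝ) (w : X → ℝ), MemLp u (ENNReal.ofReal (p + 1)) μ ∧ 0 ≤ u ∧
      MemLp w (ENNReal.ofReal (q + 1)) ν ∧ 0 ≤ w ∧ ¬ u =ᵐ[μ] 0 ∧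
      w = hammerstein k μ p u ∧ u = hammerstein (Function.swap k) ν q w := by
  obtain ⟨u, w, l, hl, hu, hu0, hw, hw0, hu_ne, hwu, huw⟩ :=
    exists_hammerstein_eigenpair hk hk_lip hk_pos hp hq hφ hφ0 hψ hψ0
  -- The pair `(a * u, b * w)` solves the system iff `b * l ^ p = a ^ p` and `a = b ^ q`.
  set s := p / (p * q - 1)
  have hs : p * q - 1 ≠ 0 := sub_ne_zero.2 hpq
  set a := l ^ (q * s)
  set b := l ^ s
  have ha : 0 < a := Real.rpow_pos_of_pos hl _
  have hb : 0 < b := Real.rpow_pos_of_pos hl _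
  have hab : b ^ q = a := by rw [← Real.rpow_mul hl.le, mul_comm]
  have hba : b * l ^ p = a ^ p := by
    rw [← Real.rpow_add hl, ← Real.rpow_mul hl.le]
    congr 1
    simp only [s]
    field_simp
    ring
  refine ⟨fun y => a * u y, fun x => b * w x, hu.const_mul a, fun y => mul_nonneg ha.le (hu0 y),
    hw.const_mul b, fun x => mul_nonneg hb.le (hw0 x),
    fun h => hu_ne (h.mono fun y hy => (mul_eq_zero_iff_left ha.ne').1 hy),
    funext fun x => ?_, funext fun y => ?_⟩
  · rw [hammerstein_const_mul ha.le hu0, ← hba, hwu, hammerstein_const_mul hl.le hu0, mul_assoc]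
  · rw [hammerstein_const_mul hb.le hw0, hab, ← huw]

end System

end Maximizer

section GreenKernel

/-- Green's function of `-d²/dt²` on the half-line with Dirichlet condition at `0` and bounded
solutions, extended by zero to nonpositive arguments. -/
def greenKernel (s t : ℝ) : ℝ := max 0 (min s t)

theorem greenKernel_nonneg (s t : ℝ) : 0 ≤ greenKernel s t := le_max_left _ _

theorem greenKernel_pos {s t : ℝ} (hs : 0 < s) (ht : 0 < t) : 0 < greenKernel s t :=
  lt_max_of_lt_right (lt_min hs ht)

theorem swap_greenKernel : Function.swap greenKernel = greenKernel :=
  funext₂ fun s t => by simp only [Function.swap, greenKernel, min_comm]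

theorem continuous_greenKernel : Continuous (Function.uncurry greenKernel) := by
  unfold greenKernel Function.uncurry
  fun_prop

theorem abs_greenKernel_sub_le (s s' t : ℝ) :
    |greenKernel s t - greenKernel s' t| ≤ dist s s' :=
  calc |greenKernel s t - greenKernel s' t|
      ≤ max |(0 : ℝ) - 0| |min s t - min s' t| := abs_max_sub_max_le_max ..
    _ = |min s t - min s' t| := by simp
    _ ≤ max |s - s'| |t - t| := abs_min_sub_min_le_max ..
    _ = dist s s' := by simp [Real.dist_eq]

theorem greenKernel_le {θ : ℝ} (hθ0 : 0 ≤ θ) (hθ1 : θ ≤ 1) (s t : ℝ) :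
    greenKernel s t ≤ (1 + |s|) ^ (1 - θ) * (1 + |t|) ^ θ := by
  have hs : greenKernel s t ≤ 1 + |s| :=
    max_le (by positivity) ((min_le_left s t).trans (by linarith [le_abs_self s]))
  have ht : greenKernel s t ≤ 1 + |t| :=
    max_le (by positivity) ((min_le_right s t).trans (by linarith [le_abs_self t]))
  have h0 := greenKernel_nonneg s t
  calc greenKernel s t = greenKernel s t ^ (1 - θ) * greenKernel s t ^ θ := by
        rw [← Real.rpow_add_of_nonneg h0 (by linarith) hθ0, sub_add_cancel, Real.rpow_one]
    _ ≤ (1 + |s|) ^ (1 - θ) * (1 + |t|) ^ θ := by gcongr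

theorem isDominatedKernel_greenKernel {θ : ℝ} (hθ0 : 0 ≤ θ) (hθ1 : θ ≤ 1) :
    IsDominatedKernel greenKernel (fun s => (1 + |s|) ^ (1 - θ)) (fun t => (1 + |t|) ^ θ) where
  measurable := continuous_greenKernel.measurable
  nonneg := greenKernel_nonneg
  le_mul := greenKernel_le hθ0 hθ1

theorem abs_greenKernel_sub_le_mul {θ : ℝ} (hθ0 : 0 ≤ θ) (s s' t : ℝ) :
    |greenKernel s t - greenKernel s' t| ≤ (1 + |t|) ^ θ * dist s s' :=
  (abs_greenKernel_sub_le s s' t).trans (le_mul_of_one_le_left dist_nonneg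
    (Real.one_le_rpow (by linarith [abs_nonneg t]) hθ0))

theorem memLp_one_add_abs_rpow {μ : Measure ℝ} {A p θ : ℝ} (hp : 0 < p)
    (hμ : ∀ r < A, Integrable (fun t => (1 + |t|) ^ r) μ) (hθ : θ * (p + 1) < A) :
    MemLp (fun t : ℝ => (1 + |t|) ^ θ) (ENNReal.ofReal (p + 1)) μ := by
  have hmeas : Measurable fun t : ℝ => (1 + |t|) ^ θ := by fun_prop
  rw [← integrable_norm_rpow_iff hmeas.aestronglyMeasurable (ENNReal.ofReal_pos.2 (by linarith)).ne'
    ENNReal.ofReal_ne_top, ENNReal.toReal_ofReal (by linarith)]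
  refine (hμ _ hθ).congr (ae_of_all _ fun t => ?_)
  have ht : 0 ≤ 1 + |t| := by positivity
  simp only [Real.norm_of_nonneg (Real.rpow_nonneg ht _), Real.rpow_mul ht]

variable {μ ν : Measure ℝ} {A B p q θ : ℝ} {u w : ℝ → ℝ}

theorem integrable_rpow_mul_one_add_abs_rpow {C r : ℝ} (hp : 0 ≤ p)
    (hμ : ∀ r < A, Integrable (fun t => (1 + |t|) ^ r) μ) (hu : AEMeasurable u μ) (hu0 : 0 ≤ u)
    (hle : ∀ t, u t ≤ C * (1 + |t|) ^ r) (hr : r * p + θ < A) :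
    Integrable (fun t => u t ^ p * (1 + |t|) ^ θ) μ := by
  have hC : 0 ≤ C := by simpa using (hu0 0).trans (hle 0)
  have hmeas : AEMeasurable (fun t => u t ^ p * (1 + |t|) ^ θ) μ :=
    (hu.pow_const p).mul (by fun_prop)
  refine ((hμ _ hr).const_mul (C ^ p)).mono' hmeas.aestronglyMeasurable (ae_of_all _ fun t => ?_)
  have ht : 0 < 1 + |t| := by positivity
  rw [Real.norm_of_nonneg (mul_nonneg (Real.rpow_nonneg (hu0 t) p) (by positivity))]
  calc u t ^ p * (1 + |t|) ^ θ ≤ (C * (1 + |t|) ^ r) ^ p * (1 + |t|) ^ θ := by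
        gcongr
        exacts [hu0 t, hle t]
    _ = C ^ p * (1 + |t|) ^ (r * p + θ) := by
        rw [Real.mul_rpow hC (by positivity), ← Real.rpow_mul ht.le, Real.rpow_add ht, mul_assoc]

theorem continuous_hammerstein_greenKernel (hθ0 : 0 ≤ θ) (hθ1 : θ ≤ 1) (hu : AEMeasurable u μ)
    (hu0 : 0 ≤ u) (hI : Integrable (fun t => u t ^ p * (1 + |t|) ^ θ) μ) :
    Continuous (hammerstein greenKernel μ p u) :=
  (LipschitzWith.of_dist_le' (dist_hammerstein_le (isDominatedKernel_greenKernel hθ0 hθ1)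
    (abs_greenKernel_sub_le_mul hθ0) hu hu0 hI)).continuous

theorem hammerstein_greenKernel_le {C r s : ℝ} (hp : 0 ≤ p)
    (hμ : ∀ r < A, Integrable (fun t => (1 + |t|) ^ r) μ) (hu : AEMeasurable u μ) (hu0 : 0 ≤ u)
    (hle : ∀ t, u t ≤ C * (1 + |t|) ^ r) (hs0 : 0 ≤ s) (hs1 : s ≤ 1) (hrs : r * p + (1 - s) < A) :
    ∃ C', ∀ t, hammerstein greenKernel μ p u t ≤ C' * (1 + |t|) ^ s := by
  have hk := isDominatedKernel_greenKernel (sub_nonneg.2 hs1) (sub_le_self 1 hs0)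
  have hI := integrable_rpow_mul_one_add_abs_rpow hp hμ hu hu0 hle hrs
  refine ⟨∫ t, u t ^ p * (1 + |t|) ^ (1 - s) ∂μ, fun t =>
    (hammerstein_le hk hu hu0 hI t).trans_eq ?_⟩
  rw [sub_sub_cancel, mul_comm]

theorem growth_exponent_lt {a b ε s : ℝ} (ha0 : 0 ≤ a) (ha1 : a ≤ 1) (hε : 0 ≤ ε)
    (hab : a - b ≤ ε) (hs0 : 0 ≤ s) (hs1 : s ≤ 1) (h0 : 1 + ε < A) (h1 : s * (p + 1) + ε < A) :
    a * s * p + (1 - b * (1 - s)) < A := by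
  have hconvex : (1 - a) * 1 + a * (s * (p + 1)) ≤ max 1 (s * (p + 1)) := by
    nlinarith [le_max_left 1 (s * (p + 1)), le_max_right 1 (s * (p + 1))]
  have hgap : (a - b) * (1 - s) ≤ ε := by nlinarith
  calc a * s * p + (1 - b * (1 - s))
      = (1 - a) * 1 + a * (s * (p + 1)) + (a - b) * (1 - s) := by ring
    _ ≤ max 1 (s * (p + 1)) + ε := add_le_add hconvex hgap
    _ < A := by rw [← max_add_add_right]; exact max_lt h0 h1

theorem hammerstein_greenKernel_le_of_growth {C a b ε s : ℝ} (hp : 0 ≤ p)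
    (hμ : ∀ r < A, Integrable (fun t => (1 + |t|) ^ r) μ) (hu : AEMeasurable u μ) (hu0 : 0 ≤ u)
    (hle : ∀ t, u t ≤ C * (1 + |t|) ^ (a * s)) (ha0 : 0 ≤ a) (ha1 : a ≤ 1) (hb0 : 0 ≤ b)
    (hb1 : b ≤ 1) (hε : 0 ≤ ε) (hab : a - b ≤ ε) (hs0 : 0 ≤ s) (hs1 : s ≤ 1) (h0 : 1 + ε < A)
    (h1 : s * (p + 1) + ε < A) :
    ∃ C', ∀ t, hammerstein greenKernel μ p u t ≤ C' * (1 + |t|) ^ (b * (1 - s)) :=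
  hammerstein_greenKernel_le hp hμ hu hu0 hle (mul_nonneg hb0 (sub_nonneg.2 hs1))
    (mul_le_one₀ hb1 (sub_nonneg.2 hs1) (sub_le_self 1 hs0))
    (growth_exponent_lt ha0 ha1 hε hab hs0 hs1 h0 h1)

/-- The growth exponents of `u` and `w` are moved along `a * (θ, 1 - θ)` from `a = 1` to `a = 0` in
steps of length `ε`. Each step is allowed by the moments because the condition is affine in `a` and
holds at both ends. -/
theorem exists_growth_bound_of_greenKernel_system {ε : ℝ} (hp : 0 ≤ p) (hq : 0 ≤ q)
    (hμ : ∀ r < A, Integrable (fun t => (1 + |t|) ^ r) μ)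
    (hν : ∀ r < B, Integrable (fun t => (1 + |t|) ^ r) ν)
    (hθ0 : 0 ≤ θ) (hθ1 : θ ≤ 1) (hε : 0 ≤ ε) (hA : 1 + ε < A) (hB : 1 + ε < B)
    (hθA : θ * (p + 1) + ε < A) (hθB : (1 - θ) * (q + 1) + ε < B)
    (hu : AEMeasurable u μ) (hu0 : 0 ≤ u) (hw : AEMeasurable w ν) (hw0 : 0 ≤ w)
    (hwu : w = hammerstein greenKernel μ p u) (huw : u = hammerstein greenKernel ν q w)
    (hu_le : ∃ C, ∀ t, u t ≤ C * (1 + |t|) ^ θ)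
    (hw_le : ∃ C, ∀ t, w t ≤ C * (1 + |t|) ^ (1 - θ)) (n : ℕ) :
    (∃ C, ∀ t, u t ≤ C * (1 + |t|) ^ (max 0 (1 - n * ε) * θ)) ∧
      ∃ C, ∀ t, w t ≤ C * (1 + |t|) ^ (max 0 (1 - n * ε) * (1 - θ)) := by
  induction n with
  | zero => simpa using ⟨hu_le, hw_le⟩
  | succ n ih =>
    obtain ⟨⟨C, hC⟩, D, hD⟩ := ih
    set a := max 0 (1 - n * ε)
    set b := max 0 (1 - (n + 1 : ℕ) * ε)
    have ha0 : 0 ≤ a := le_max_left _ _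
    have hb0 : 0 ≤ b := le_max_left _ _
    have ha1 : a ≤ 1 := max_le zero_le_one (sub_le_self 1 (by positivity))
    have hb1 : b ≤ 1 := max_le zero_le_one (sub_le_self 1 (by positivity))
    have hab : a - b ≤ ε := by
      have hb : 1 - (n + 1 : ℕ) * ε ≤ b := le_max_right _ _
      push_cast at hb
      exact sub_le_iff_le_add'.2 (max_le (by positivity) (by linarith))
    have hstep_w := hammerstein_greenKernel_le_of_growth hp hμ hu hu0 hC ha0 ha1 hb0 hb1
      hε hab hθ0 hθ1 hA hθA
    have hstep_u := hammerstein_greenKernel_le_of_growth hq hν hw hw0 hD ha0 ha1 hb0 hb1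
      hε hab (sub_nonneg.2 hθ1) (sub_le_self 1 hθ0) hB hθB
    rw [sub_sub_cancel, ← huw] at hstep_u
    rw [← hwu] at hstep_w
    exact ⟨hstep_u, hstep_w⟩

theorem bddAbove_of_greenKernel_system (hp : 0 ≤ p) (hq : 0 ≤ q) (hA : 1 < A) (hB : 1 < B)
    (hμ : ∀ r < A, Integrable (fun t => (1 + |t|) ^ r) μ)
    (hν : ∀ r < B, Integrable (fun t => (1 + |t|) ^ r) ν)
    (hθ0 : 0 ≤ θ) (hθ1 : θ ≤ 1) (hθA : θ * (p + 1) < A) (hθB : (1 - θ) * (q + 1) < B)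
    (hu : AEMeasurable u μ) (hu0 : 0 ≤ u) (hw : AEMeasurable w ν) (hw0 : 0 ≤ w)
    (hwu : w = hammerstein greenKernel μ p u) (huw : u = hammerstein greenKernel ν q w)
    (hu_le : ∃ C, ∀ t, u t ≤ C * (1 + |t|) ^ θ)
    (hw_le : ∃ C, ∀ t, w t ≤ C * (1 + |t|) ^ (1 - θ)) : ∃ C, ∀ t, u t ≤ C ∧ w t ≤ C := by
  obtain ⟨ε, hε, hεmin⟩ := exists_between (show
    0 < min (min (A - 1) (A - θ * (p + 1))) (min (B - 1) (B - (1 - θ) * (q + 1))) by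
      simp only [lt_min_iff, sub_pos, hA, hB, hθA, hθB, and_self])
  simp only [lt_min_iff, lt_sub_iff_add_lt'] at hεmin
  obtain ⟨⟨hεA, hεθA⟩, hεB, hεθB⟩ := hεmin
  obtain ⟨n, hn⟩ := exists_nat_ge ε⁻¹
  have hzero : max 0 (1 - n * ε) = 0 :=
    max_eq_left (by linarith [(inv_le_iff_one_le_mul₀ hε).1 hn])
  have hgrowth := exists_growth_bound_of_greenKernel_system hp hq hμ hν hθ0 hθ1 hε.le hεA hεB
    hεθA hεθB hu hu0 hw hw0 hwu huw hu_le hw_le n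
  simp only [hzero, zero_mul, Real.rpow_zero, mul_one] at hgrowth
  obtain ⟨⟨C, hC⟩, D, hD⟩ := hgrowth
  exact ⟨max C D, fun t => ⟨le_max_of_le_left (hC t), le_max_of_le_right (hD t)⟩⟩

theorem exists_admissible_splitting (hp : 0 < p) (hq : 0 < q) (hA : 0 < A) (hB : 0 < B)
    (hAB : 1 < A / (p + 1) + B / (q + 1)) :
    ∃ θ, 0 ≤ θ ∧ θ ≤ 1 ∧ θ * (p + 1) < A ∧ (1 - θ) * (q + 1) < B := by
  have hA' : 0 < A / (p + 1) := by positivity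
  have hB' : 0 < B / (q + 1) := by positivity
  obtain ⟨θ, hlo, hhi⟩ := exists_between (show max 0 (1 - B / (q + 1)) < min 1 (A / (p + 1)) from
    max_lt (lt_min one_pos hA') (lt_min (by linarith) (by linarith)))
  rw [max_lt_iff, sub_lt_comm, lt_div_iff₀ (by linarith)] at hlo
  rw [lt_min_iff, lt_div_iff₀ (by linarith)] at hhi
  exact ⟨θ, hlo.1.le, hhi.1.le, hhi.2, hlo.2⟩

theorem exists_greenKernel_system [SFinite μ] [SFinite ν] [NeZero μ] [NeZero ν]
    (hμ_pos : ∀ᵐ t ∂μ, 0 < t) (hν_pos : ∀ᵐ t ∂ν, 0 < t)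
    (hμ : ∀ r < A, Integrable (fun t => (1 + |t|) ^ r) μ)
    (hν : ∀ r < B, Integrable (fun t => (1 + |t|) ^ r) ν) (hA : 1 < A) (hB : 1 < B)
    (hp : 0 < p) (hq : 0 < q) (hpq : p * q ≠ 1) (hAB : 1 < A / (p + 1) + B / (q + 1)) :
    ∃ u w : ℝ → ℝ, Continuous u ∧ Continuous w ∧ 0 ≤ u ∧ 0 ≤ w ∧ (∀ t > 0, 0 < u t ∧ 0 < w t) ∧
      (∃ C, ∀ t, u t ≤ C ∧ w t ≤ C) ∧
      w = hammerstein greenKernel μ p u ∧ u = hammerstein greenKernel ν q w := by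
  obtain ⟨θ, hθ0, hθ1, hθA, hθB⟩ :=
    exists_admissible_splitting hp hq (by linarith) (by linarith) hAB
  have hθ0' := sub_nonneg.2 hθ1
  have hφ0 (s : ℝ) : (0 : ℝ → ℝ) ≤ fun t => (1 + |t|) ^ s := fun t => by positivity
  have hφ := memLp_one_add_abs_rpow hp hμ hθA
  have hψ := memLp_one_add_abs_rpow hq hν hθB
  have hk := isDominatedKernel_greenKernel hθ0 hθ1
  have hk' := hk.swap
  have hk_lip := abs_greenKernel_sub_le_mul hθ0
  obtain ⟨u, w, hu, hu0, hw, hw0, hu_ne, hwu, huw⟩ := exists_hammerstein_system hk hk_lip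
    (hν_pos.mono fun s hs => hμ_pos.mono fun t ht => greenKernel_pos hs ht) hp hq hpq
    hφ (hφ0 _) hψ (hφ0 _)
  rw [swap_greenKernel] at huw hk'
  have hu_meas := hu.aestronglyMeasurable.aemeasurable
  have hw_meas := hw.aestronglyMeasurable.aemeasurable
  have hIu := integrable_rpow_mul hp hu hu0 hφ (hφ0 _)
  have hIw := integrable_rpow_mul hq hw hw0 hψ (hφ0 _)
  have hw_ne : ¬ w =ᵐ[ν] 0 := fun hw_zero => hu_ne <| .of_forall fun t => by
    rw [huw]
    exact integral_eq_zero_of_ae (hw_zero.mono fun y hy => by simp [hy, Real.zero_rpow hq.ne'])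
  refine ⟨u, w, ?_, ?_, hu0, hw0, fun t ht => ⟨?_, ?_⟩, ?_, hwu, huw⟩
  · rw [huw]
    exact continuous_hammerstein_greenKernel hθ0' (sub_le_self 1 hθ0) hw_meas hw0 hIw
  · rw [hwu]
    exact continuous_hammerstein_greenKernel hθ0 hθ1 hu_meas hu0 hIu
  · rw [huw]
    exact hammerstein_pos hk' hw_meas hw0 hIw (hν_pos.mono fun s hs => greenKernel_pos ht hs) hw_ne
  · rw [hwu]
    exact hammerstein_pos hk hu_meas hu0 hIu (hμ_pos.mono fun s hs => greenKernel_pos ht hs) hu_ne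
  · refine bddAbove_of_greenKernel_system hp.le hq.le hA hB hμ hν hθ0 hθ1 hθA hθB hu_meas hu0
      hw_meas hw0 hwu huw ⟨∫ t, w t ^ q * (1 + |t|) ^ (1 - θ) ∂ν, fun t => ?_⟩
      ⟨∫ t, u t ^ p * (1 + |t|) ^ θ ∂μ, fun t => ?_⟩
    · rw [congrFun huw t, mul_comm]
      exact hammerstein_le hk' hw_meas hw0 hIw t
    · rw [congrFun hwu t, mul_comm]
      exact hammerstein_le hk hu_meas hu0 hIu t

end GreenKernel

section GreenPotential

open scoped Topology

variable {F : ℝ → ℝ} {t : ℝ}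

/-- The Green potential of `F` on the half-line: the solution of `-v'' = F`, `v 0 = 0` that stays
bounded at infinity. -/
def greenPotential (F : ℝ → ℝ) (t : ℝ) : ℝ := ∫ τ in Ioi 0, greenKernel t τ * F τ

theorem greenPotential_zero : greenPotential F 0 = 0 :=
  setIntegral_eq_zero_of_forall_eq_zero fun τ hτ => by
    simp [greenKernel, min_eq_left (mem_Ioi.1 hτ).le]

theorem norm_greenKernel_mul_le {τ : ℝ} (hτ : 0 ≤ τ) (a : ℝ) :
    ‖greenKernel t τ * a‖ ≤ ‖τ * a‖ := by
  rw [norm_mul, norm_mul, Real.norm_of_nonneg (greenKernel_nonneg t τ), Real.norm_of_nonneg hτ]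
  gcongr
  exact max_le hτ (min_le_right t τ)

theorem continuous_greenPotential (hF : AEStronglyMeasurable F (volume.restrict (Ioi 0)))
    (hF₁ : IntegrableOn (fun τ => τ * F τ) (Ioi 0)) : Continuous (greenPotential F) :=
  continuous_of_dominated
    (fun _ => (continuous_greenKernel.along_snd.aestronglyMeasurable).mul hF)
    (fun _ => ae_restrict_of_forall_mem measurableSet_Ioi fun τ hτ =>
      norm_greenKernel_mul_le (mem_Ioi.1 hτ).le (F τ)) hF₁.norm
    (.of_forall fun _ => continuous_greenKernel.along_fst.mul continuous_const)

theorem greenPotential_le_integral_mul (hF : AEStronglyMeasurable F (volume.restrict (Ioi 0)))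
    (hF₁ : IntegrableOn (fun τ => τ * F τ) (Ioi 0)) (hF0 : 0 ≤ F) (t : ℝ) :
    greenPotential F t ≤ ∫ τ in Ioi 0, τ * F τ := by
  have hle {τ : ℝ} (hτ : τ ∈ Ioi 0) := norm_greenKernel_mul_le (t := t) (mem_Ioi.1 hτ).le (F τ)
  have hint : IntegrableOn (fun τ => greenKernel t τ * F τ) (Ioi 0) :=
    Integrable.mono hF₁ ((continuous_greenKernel.along_snd.aestronglyMeasurable).mul hF)
      (ae_restrict_of_forall_mem measurableSet_Ioi fun τ hτ => hle hτ)
  refine setIntegral_mono_on hint hF₁ measurableSet_Ioi fun τ hτ => ?_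
  exact (le_abs_self _).trans ((hle hτ).trans_eq <|
    Real.norm_of_nonneg (mul_nonneg (mem_Ioi.1 hτ).le (hF0 τ)))

theorem tendsto_greenPotential_atTop (hF : AEStronglyMeasurable F (volume.restrict (Ioi 0)))
    (hF₁ : IntegrableOn (fun τ => τ * F τ) (Ioi 0)) :
    Tendsto (greenPotential F) atTop (𝓝 (∫ τ in Ioi 0, τ * F τ)) := by
  refine tendsto_integral_filter_of_dominated_convergence (fun τ => ‖τ * F τ‖)
    (.of_forall fun t => (continuous_greenKernel.along_snd.aestronglyMeasurable).mul hF)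
    (.of_forall fun t => ae_restrict_of_forall_mem measurableSet_Ioi fun τ hτ =>
      norm_greenKernel_mul_le (mem_Ioi.1 hτ).le (F τ)) hF₁.norm
    (ae_restrict_of_forall_mem measurableSet_Ioi fun τ (hτ : 0 < τ) =>
      tendsto_const_nhds.congr' ?_)
  filter_upwards [eventually_ge_atTop τ] with t ht
  rw [greenKernel, min_eq_right ht, max_eq_right hτ.le]

theorem greenPotential_eq (hF₀ : IntegrableOn F (Ioi 0))
    (hF₁ : IntegrableOn (fun τ => τ * F τ) (Ioi 0)) (ht : 0 ≤ t) :
    greenPotential F t = (∫ τ in (0)..t, τ * F τ) + t * ∫ τ in Ioi t, F τ := by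
  have hlow : EqOn (fun τ => greenKernel t τ * F τ) (fun τ => τ * F τ) (Ioc 0 t) := fun τ hτ => by
    simp only [greenKernel, min_eq_right hτ.2, max_eq_right hτ.1.le]
  have hhigh : EqOn (fun τ => greenKernel t τ * F τ) (fun τ => t * F τ) (Ioi t) := fun τ hτ => by
    simp only [greenKernel, min_eq_left (mem_Ioi.1 hτ).le, max_eq_right ht]
  rw [greenPotential, ← Ioc_union_Ioi_eq_Ioi ht, setIntegral_union Ioc_disjoint_Ioi_same
    measurableSet_Ioi, setIntegral_congr_fun measurableSet_Ioc hlow,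
    setIntegral_congr_fun measurableSet_Ioi hhigh, integral_const_mul,
    intervalIntegral.integral_of_le ht]
  · exact (hF₁.mono_set Ioc_subset_Ioi_self).congr_fun hlow.symm measurableSet_Ioc
  · exact IntegrableOn.congr_fun ((hF₀.mono_set (Ioi_subset_Ioi ht)).const_mul t) hhigh.symm
      measurableSet_Ioi

theorem hasDerivAt_integral_Ioi {a : ℝ} (hF : Continuous F) (hFi : IntegrableOn F (Ioi a))
    (ht : a < t) : HasDerivAt (fun s => ∫ τ in Ioi s, F τ) (-F t) t := by
  refine ((hF.integral_hasStrictDerivAt a t).hasDerivAt.const_sub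
    (∫ τ in Ioi a, F τ)).congr_of_eventuallyEq ?_
  filter_upwards [lt_mem_nhds ht] with s hs
  rw [← intervalIntegral.integral_Ioi_sub_Ioi hFi hs.le, sub_sub_cancel]

theorem hasDerivAt_greenPotential (hF : Continuous F) (hF₀ : IntegrableOn F (Ioi 0))
    (hF₁ : IntegrableOn (fun τ => τ * F τ) (Ioi 0)) (ht : 0 < t) :
    HasDerivAt (greenPotential F) (∫ τ in Ioi t, F τ) t := by
  have hlow := ((continuous_id.mul hF).integral_hasStrictDerivAt 0 t).hasDerivAt
  have hhigh := (hasDerivAt_id t).mul (hasDerivAt_integral_Ioi hF hF₀ ht)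
  refine ((hlow.add hhigh).congr_of_eventuallyEq ?_).congr_deriv (by simp)
  filter_upwards [lt_mem_nhds ht] with s hs using greenPotential_eq hF₀ hF₁ hs.le

variable {A C : ℝ}

theorem integrableOn_one_add_rpow_Ioi {r : ℝ} (hr : r < -1) (ht : 0 ≤ t) :
    IntegrableOn (fun τ : ℝ => (1 + τ) ^ r) (Ioi t) := by
  simpa only [add_comm] using integrableOn_add_rpow_Ioi_of_lt (m := 1) hr (by linarith)

theorem integral_one_add_rpow_Ioi (hA : 0 < A) (ht : 0 ≤ t) :
    ∫ τ in Ioi t, (1 + τ) ^ (-1 - A) = A⁻¹ * (1 + t) ^ (-A) := by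
  have hshift := (measurePreserving_add_left volume (1 : ℝ)).setIntegral_preimage_emb
    (measurableEmbedding_addLeft 1) (fun τ : ℝ => τ ^ (-1 - A)) (Ioi (1 + t))
  rw [preimage_const_add_Ioi, add_sub_cancel_left] at hshift
  rw [hshift, integral_Ioi_rpow_of_lt (by linarith) (by linarith),
    show -1 - A + 1 = -A by ring]
  field_simp

theorem integrableOn_Ioi_of_abs_le (hA : 0 < A) (hF : Continuous F)
    (hF_le : ∀ t > 0, |F t| ≤ C * (1 + t) ^ (-1 - A)) : IntegrableOn F (Ioi 0) :=
  ((integrableOn_one_add_rpow_Ioi (by linarith) le_rfl).const_mul C).mono'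
    hF.aestronglyMeasurable (ae_restrict_of_forall_mem measurableSet_Ioi hF_le)

theorem integrableOn_mul_Ioi_of_abs_le (hA : 1 < A) (hF : Continuous F)
    (hF_le : ∀ t > 0, |F t| ≤ C * (1 + t) ^ (-1 - A)) :
    IntegrableOn (fun τ => τ * F τ) (Ioi 0) := by
  refine integrableOn_Ioi_of_abs_le (sub_pos.2 hA) (continuous_id.mul hF) (C := C) fun t ht => ?_
  calc |t * F t| = t * |F t| := by rw [abs_mul, abs_of_pos ht]
    _ ≤ (1 + t) * (C * (1 + t) ^ (-1 - A)) := by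
        gcongr
        exacts [by linarith, hF_le t ht]
    _ = C * (1 + t) ^ (-1 - (A - 1)) := by
        rw [show -1 - (A - 1) = 1 + (-1 - A) by ring, Real.rpow_add (by linarith), Real.rpow_one]
        ring

theorem abs_integral_Ioi_le (hA : 0 < A) (hF_le : ∀ t > 0, |F t| ≤ C * (1 + t) ^ (-1 - A))
    (ht : 0 ≤ t) : |∫ τ in Ioi t, F τ| ≤ C / A * (1 + t) ^ (-A) := by
  have hint := (integrableOn_one_add_rpow_Ioi (by linarith : -1 - A < -1) ht).const_mul C
  calc |∫ τ in Ioi t, F τ| = ‖∫ τ in Ioi t, F τ‖ := rfl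
    _ ≤ ∫ τ in Ioi t, C * (1 + τ) ^ (-1 - A) :=
        norm_integral_le_of_norm_le hint
          (ae_restrict_of_forall_mem measurableSet_Ioi fun τ hτ => hF_le τ (ht.trans_lt hτ))
    _ = C / A * (1 + t) ^ (-A) := by
        rw [integral_const_mul, integral_one_add_rpow_Ioi hA ht, div_eq_mul_inv, mul_assoc]

end GreenPotential

section RadialCalculus

open scoped Topology

theorem hasFDerivAt_of_eventually_hasFDerivAt {X Y : Type*} [NormedAddCommGroup X]
    [NormedSpace ℝ X] [NormedAddCommGroup Y] [NormedSpace ℝ Y] {f : X → Y} {f' : X → X →L[ℝ] Y}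
    {a : X} (hf : ∀ᶠ x in 𝓝[≠] a, HasFDerivAt f (f' x) x) (hf_cont : ContinuousAt f a)
    (hf'_cont : ContinuousAt f' a) : HasFDerivAt f (f' a) a := by
  rw [hasFDerivAt_iff_isLittleO, Asymptotics.isLittleO_iff]
  intro c hc
  have hclose : ∀ᶠ x in 𝓝 a, x ≠ a → HasFDerivAt f (f' x) x ∧ ‖f' x - f' a‖ ≤ c := by
    filter_upwards [eventually_nhdsWithin_iff.1 hf, hf'_cont.eventually (closedBall_mem_nhds _ hc)]
      with x hx hx' hxa using ⟨hx hxa, mem_closedBall_iff_norm.1 hx'⟩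
  obtain ⟨δ, hδ, hball⟩ := Metric.eventually_nhds_iff_ball.1 hclose
  filter_upwards [ball_mem_nhds a hδ] with x hx
  rcases eq_or_ne x a with rfl | hxa
  · simp
  set γ : ℝ →ᵃ[ℝ] X := AffineMap.lineMap a x
  have hγ_ne (t : ℝ) (ht : t ∈ Ioc 0 1) : γ t ≠ a := by
    simp [γ, AffineMap.lineMap_eq_left_iff, hxa.symm, ht.1.ne']
  have hγ_mem (t : ℝ) (ht : t ∈ Ioc 0 1) : γ t ∈ ball a δ :=
    (convex_ball a δ).lineMap_mem (mem_ball_self hδ) hx ⟨ht.1.le, ht.2⟩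
  have hsegment : ∀ t ∈ Ioc (0 : ℝ) 1, ‖f x - f (γ t) - f' a (x - γ t)‖ ≤ c * ‖x - γ t‖ := by
    intro t ht
    refine Convex.norm_image_sub_le_of_norm_hasFDerivWithin_le' (s := γ '' Ioc 0 1) (f' := f')
      ?_ ?_ ?_ (mem_image_of_mem _ ht) ⟨1, by simp, by simp [γ]⟩
    · rintro _ ⟨s, hs, rfl⟩
      exact (hball _ (hγ_mem s hs) (hγ_ne s hs)).1.hasFDerivWithinAt
    · rintro _ ⟨s, hs, rfl⟩
      exact (hball _ (hγ_mem s hs) (hγ_ne s hs)).2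
    · exact (convex_Ioc 0 1).affine_image _
  have hγ_lim : Tendsto γ (𝓝[>] 0) (𝓝 a) := by
    have hγ_cont : Continuous γ := AffineMap.lineMap_continuous
    simpa [γ] using (hγ_cont.tendsto 0).mono_left nhdsWithin_le_nhds
  refine le_of_tendsto_of_tendsto (((hf_cont.tendsto.comp hγ_lim).const_sub (f x)).sub
    (((f' a).continuous.tendsto _).comp (hγ_lim.const_sub x))).norm
    ((hγ_lim.const_sub x).norm.const_mul c) ?_
  filter_upwards [Ioc_mem_nhdsGT one_pos] with t ht using hsegment t ht

/-- `ψ` is a function of the squared radius with derivatives `ψ₁` and `ψ₂` away from the origin,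
whose behaviour at the origin makes `ψ (‖x‖ ^ 2)` twice continuously differentiable on the ball of
radius `R`. No second derivative of `ψ` at `0` is required. -/
structure IsRadialProfile (R : ℝ) (ψ ψ₁ ψ₂ : ℝ → ℝ) : Prop where
  hasDerivAt : ∀ ρ ∈ Ioo 0 (R ^ 2), HasDerivAt ψ (ψ₁ ρ) ρ
  hasDerivAt₁ : ∀ ρ ∈ Ioo 0 (R ^ 2), HasDerivAt ψ₁ (ψ₂ ρ) ρ
  continuousOn₂ : ContinuousOn ψ₂ (Ioo 0 (R ^ 2))
  tendsto_zero : Tendsto ψ (𝓝[>] 0) (𝓝 (ψ 0))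
  tendsto_zero₁ : Tendsto ψ₁ (𝓝[>] 0) (𝓝 (ψ₁ 0))
  tendsto_zero₂ : Tendsto (fun ρ => ρ * ψ₂ ρ) (𝓝[>] 0) (𝓝 0)

variable {X : Type*} [NormedAddCommGroup X] {R : ℝ} {ψ ψ₁ ψ₂ : ℝ → ℝ} {x : X}

theorem norm_sq_mem_Ioo (hx : x ∈ ball 0 R) (hx0 : x ≠ 0) : ‖x‖ ^ 2 ∈ Ioo 0 (R ^ 2) := by
  have hxR : ‖x‖ < R := mem_ball_zero_iff.1 hx
  exact ⟨by positivity, by gcongr⟩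

theorem tendsto_norm_sq_nhdsNE_zero : Tendsto (fun x : X => ‖x‖ ^ 2) (𝓝[≠] 0) (𝓝[>] 0) := by
  refine tendsto_nhdsWithin_iff.2 ⟨?_, ?_⟩
  · have hcont : Continuous fun x : X => ‖x‖ ^ 2 := by fun_prop
    simpa using (hcont.tendsto 0).mono_left nhdsWithin_le_nhds
  · filter_upwards [self_mem_nhdsWithin] with x (hx : x ≠ 0)
    exact mem_Ioi.2 (by positivity)

theorem continuousAt_comp_norm_sq_zero (h : Tendsto ψ (𝓝[>] 0) (𝓝 (ψ 0))) :
    ContinuousAt (fun x : X => ψ (‖x‖ ^ 2)) 0 := by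
  rw [continuousAt_iff_punctured_nhds]
  simpa [Function.comp_def] using h.comp tendsto_norm_sq_nhdsNE_zero

theorem continuousAt_comp_norm_sq (h : ContinuousAt ψ (‖x‖ ^ 2)) :
    ContinuousAt (fun y : X => ψ (‖y‖ ^ 2)) x :=
  ContinuousAt.comp (f := fun y : X => ‖y‖ ^ 2) h (by fun_prop)

variable [InnerProductSpace ℝ X]

theorem hasFDerivAt_comp_norm_sq {g : ℝ → ℝ} {g' : ℝ} (h : HasDerivAt g g' (‖x‖ ^ 2)) :
    HasFDerivAt (fun y : X => g (‖y‖ ^ 2)) (innerSL ℝ ((2 : ℝ) • g' • x)) x := by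
  refine (h.comp_hasFDerivAt x (hasStrictFDerivAt_norm_sq x).hasFDerivAt).congr_fderiv ?_
  ext y
  simp only [smul_apply, coe_innerSL_apply, nsmul_eq_mul, Nat.cast_ofNat, smul_eq_mul, map_smul]
  ring

/-- The derivative of the vector field `x ↦ ψ₁ (‖x‖ ^ 2) • x` when `ψ₁' = ψ₂`. -/
def radialFieldFDeriv (ψ₁ ψ₂ : ℝ → ℝ) (x : X) : X →L[ℝ] X :=
  ψ₁ (‖x‖ ^ 2) • .id ℝ X + (2 * ψ₂ (‖x‖ ^ 2)) • (innerSL ℝ x).smulRight x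

theorem IsRadialProfile.continuousAt_radialFieldFDeriv (h : IsRadialProfile R ψ ψ₁ ψ₂)
    (hx : x ∈ ball 0 R) : ContinuousAt (radialFieldFDeriv ψ₁ ψ₂ : X → X →L[ℝ] X) x := by
  have hsplit (h₁ : ContinuousAt (fun y : X => ψ₁ (‖y‖ ^ 2)) x) (h₂ : ContinuousAt
      (fun y : X => (2 * ψ₂ (‖y‖ ^ 2)) • (innerSL ℝ y).smulRight y) x) :
      ContinuousAt (radialFieldFDeriv ψ₁ ψ₂ : X → X →L[ℝ] X) x :=
    (h₁.smul continuousAt_const).add h₂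
  rcases eq_or_ne x 0 with rfl | hx0
  · refine hsplit (continuousAt_comp_norm_sq_zero h.tendsto_zero₁) ?_
    rw [continuousAt_iff_punctured_nhds]
    refine (tendsto_zero_iff_norm_tendsto_zero.2 ?_).trans_eq (by simp)
    have hnorm (y : X) : ‖(2 * ψ₂ (‖y‖ ^ 2)) • (innerSL ℝ y).smulRight y‖ =
        2 * |‖y‖ ^ 2 * ψ₂ (‖y‖ ^ 2)| := by
      rw [norm_smul, ContinuousLinearMap.norm_smulRight_apply, innerSL_apply_norm, norm_mul,
        Real.norm_two, Real.norm_eq_abs, abs_mul, abs_of_nonneg (sq_nonneg ‖y‖)]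
      ring
    simpa [hnorm] using (h.tendsto_zero₂.comp tendsto_norm_sq_nhdsNE_zero).abs.const_mul 2
  · have hρ := norm_sq_mem_Ioo hx hx0
    refine hsplit (continuousAt_comp_norm_sq (h.hasDerivAt₁ _ hρ).continuousAt) ?_
    have hψ₂ := continuousAt_comp_norm_sq (h.continuousOn₂.continuousAt (isOpen_Ioo.mem_nhds hρ))
    exact (hψ₂.const_mul 2).smul <|
      (ContinuousLinearMap.smulRightL ℝ X X).continuous₂.continuousAt.comp
        ((innerSL ℝ).continuous.continuousAt.prodMk continuousAt_id)

theorem IsRadialProfile.hasFDerivAt_radialField (h : IsRadialProfile R ψ ψ₁ ψ₂)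
    (hx : x ∈ ball 0 R) :
    HasFDerivAt (fun y : X => ψ₁ (‖y‖ ^ 2) • y) (radialFieldFDeriv ψ₁ ψ₂ x) x := by
  have hne (y : X) (hy : y ∈ ball 0 R) (hy0 : y ≠ 0) :
      HasFDerivAt (fun y : X => ψ₁ (‖y‖ ^ 2) • y) (radialFieldFDeriv ψ₁ ψ₂ y) y := by
    refine ((hasFDerivAt_comp_norm_sq (h.hasDerivAt₁ _ (norm_sq_mem_Ioo hy hy0))).smul
      (hasFDerivAt_id y)).congr_fderiv ?_
    ext z
    simp [radialFieldFDeriv, smul_smul, mul_assoc]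
  rcases eq_or_ne x 0 with rfl | hx0
  · refine hasFDerivAt_of_eventually_hasFDerivAt ?_
      ((continuousAt_comp_norm_sq_zero h.tendsto_zero₁).smul continuousAt_id)
      (h.continuousAt_radialFieldFDeriv hx)
    filter_upwards [self_mem_nhdsWithin, nhdsWithin_le_nhds (isOpen_ball.mem_nhds hx)]
      with y hy0 hy using hne y hy hy0
  · exact hne x hx hx0

theorem IsRadialProfile.hasFDerivAt_comp_norm_sq (h : IsRadialProfile R ψ ψ₁ ψ₂)
    (hx : x ∈ ball 0 R) :
    HasFDerivAt (fun y : X => ψ (‖y‖ ^ 2)) (innerSL ℝ ((2 : ℝ) • ψ₁ (‖x‖ ^ 2) • x)) x := by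
  have hne (y : X) (hy : y ∈ ball 0 R) (hy0 : y ≠ 0) :=
    _root_.hasFDerivAt_comp_norm_sq (h.hasDerivAt _ (norm_sq_mem_Ioo hy hy0))
  rcases eq_or_ne x 0 with rfl | hx0
  · refine hasFDerivAt_of_eventually_hasFDerivAt
      (f' := fun y => innerSL ℝ ((2 : ℝ) • ψ₁ (‖y‖ ^ 2) • y)) ?_
      (continuousAt_comp_norm_sq_zero h.tendsto_zero) ((innerSL ℝ).continuous.continuousAt.comp
        ((h.hasFDerivAt_radialField hx).continuousAt.const_smul 2))
    filter_upwards [self_mem_nhdsWithin, nhdsWithin_le_nhds (isOpen_ball.mem_nhds hx)]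
      with y hy0 hy using hne y hy hy0
  · exact hne x hx hx0

theorem IsRadialProfile.contDiffOn (h : IsRadialProfile R ψ ψ₁ ψ₂) :
    ContDiffOn ℝ 2 (fun x : X => ψ (‖x‖ ^ 2)) (ball 0 R) := by
  have hfield : ContDiffOn ℝ 1 (fun x : X => ψ₁ (‖x‖ ^ 2) • x) (ball 0 R) := by
    rw [← zero_add (1 : WithTop ℕ∞), contDiffOn_succ_iff_fderiv_of_isOpen isOpen_ball]
    refine ⟨fun x hx => (h.hasFDerivAt_radialField hx).differentiableAt.differentiableWithinAt,
      by simp, contDiffOn_zero.2 fun x hx => ?_⟩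
    exact ((h.continuousAt_radialFieldFDeriv hx).continuousWithinAt).congr
      (fun y hy => (h.hasFDerivAt_radialField hy).fderiv) (h.hasFDerivAt_radialField hx).fderiv
  rw [← one_add_one_eq_two, contDiffOn_succ_iff_fderiv_of_isOpen isOpen_ball]
  refine ⟨fun x hx => (h.hasFDerivAt_comp_norm_sq hx).differentiableAt.differentiableWithinAt,
    by simp, ?_⟩
  exact ((innerSL ℝ : X →L[ℝ] X →L[ℝ] ℝ).contDiff.comp_contDiffOn (hfield.const_smul (2 : ℝ))).congr
    fun x hx => (h.hasFDerivAt_comp_norm_sq hx).fderiv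

theorem IsRadialProfile.lap_comp_norm_sq {N : ℕ} {x : E N} (h : IsRadialProfile R ψ ψ₁ ψ₂)
    (hx : x ∈ ball 0 R) : lap (fun y : E N => ψ (‖y‖ ^ 2)) x =
      2 * N * ψ₁ (‖x‖ ^ 2) + 4 * (‖x‖ ^ 2 * ψ₂ (‖x‖ ^ 2)) := by
  have hterm (i : Fin N) : fderiv ℝ (fun y => fderiv ℝ (fun y : E N => ψ (‖y‖ ^ 2)) y
      (EuclideanSpace.single i 1)) x (EuclideanSpace.single i 1) =
        2 * ψ₁ (‖x‖ ^ 2) + 4 * ψ₂ (‖x‖ ^ 2) * x i ^ 2 := by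
    have hfirst : (fun y => fderiv ℝ (fun y : E N => ψ (‖y‖ ^ 2)) y (EuclideanSpace.single i 1))
        =ᶠ[𝓝 x] fun y => 2 * inner ℝ (ψ₁ (‖y‖ ^ 2) • y) (EuclideanSpace.single i 1) := by
      filter_upwards [isOpen_ball.mem_nhds hx] with y hy
      rw [(h.hasFDerivAt_comp_norm_sq hy).fderiv, innerSL_apply_apply, inner_smul_left]
      rfl
    rw [hfirst.fderiv_eq, (((h.hasFDerivAt_radialField hx).inner ℝ
      (hasFDerivAt_const _ _)).const_mul 2).fderiv]
    simp only [radialFieldFDeriv, ContinuousLinearMap.comp_apply, ContinuousLinearMap.prod_apply,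
      ContinuousLinearMap.id_apply, ContinuousLinearMap.smulRight_apply, fderivInnerCLM_apply,
      smul_apply, add_apply, zero_apply, coe_innerSL_apply, inner_add_left, inner_smul_left,
      inner_zero_right, inner_self_eq_norm_sq_to_K, EuclideanSpace.inner_single_right,
      PiLp.norm_single, Real.ringHom_apply, norm_one, one_pow, one_mul, mul_one, zero_add,
      smul_eq_mul]
    ring
  simp only [lap, hterm, Finset.sum_add_distrib, ← Finset.mul_sum, ← EuclideanSpace.real_norm_sq_eq,
    Finset.sum_const, Finset.card_univ, Fintype.card_fin, nsmul_eq_mul]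
  ring

end RadialCalculus

section EmdenFowler

open scoped Topology

variable {m ρ : ℝ}

/-- The Emden–Fowler variable `t = r ^ (2 - N) - 1` as a function of `ρ = r ^ 2`, with
`m = (N - 2) / 2`. It sends the unit sphere to `t = 0` and the origin to `t = ∞`. -/
def emdenFowler (m ρ : ℝ) : ℝ := ρ ^ (-m) - 1

theorem emdenFowler_one : emdenFowler m 1 = 0 := by simp [emdenFowler]

theorem emdenFowler_pos (hm : 0 < m) (hρ : ρ ∈ Ioo 0 1) : 0 < emdenFowler m ρ :=
  sub_pos.2 (Real.one_lt_rpow_of_pos_of_lt_one_of_neg hρ.1 hρ.2 (neg_lt_zero.2 hm))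

theorem one_add_emdenFowler_rpow (hρ : 0 ≤ ρ) (r : ℝ) :
    (1 + emdenFowler m ρ) ^ r = ρ ^ (-m * r) := by
  rw [emdenFowler, add_sub_cancel, Real.rpow_mul hρ]

theorem hasDerivAt_emdenFowler (hρ : 0 < ρ) :
    HasDerivAt (emdenFowler m) (-m * ρ ^ (-m - 1)) ρ :=
  (Real.hasDerivAt_rpow_const (Or.inl hρ.ne')).sub_const 1

theorem tendsto_emdenFowler (hm : 0 < m) : Tendsto (emdenFowler m) (𝓝[>] 0) atTop :=
  tendsto_atTop_add_const_right _ (-1) (tendsto_rpow_neg_nhdsGT_zero (neg_lt_zero.2 hm))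

theorem tendsto_rpow_mul_comp_emdenFowler {g : ℝ → ℝ} {C r s : ℝ} (hm : 0 < m)
    (hg : ∀ t > 0, |g t| ≤ C * (1 + t) ^ r) (hs : m * r < s) :
    Tendsto (fun ρ => ρ ^ s * g (emdenFowler m ρ)) (𝓝[>] 0) (𝓝 0) := by
  have hbound : Tendsto (fun ρ : ℝ => C * ρ ^ (s - m * r)) (𝓝[>] 0) (𝓝 0) := by
    have hpow := (Real.continuousAt_rpow_const 0 (s - m * r) (Or.inr (by linarith))).tendsto
    simpa [Real.zero_rpow (sub_pos.2 hs).ne'] using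
      (hpow.mono_left nhdsWithin_le_nhds).const_mul C
  refine squeeze_zero_norm' ?_ hbound
  filter_upwards [Ioo_mem_nhdsGT one_pos] with ρ hρ
  have hρs : 0 ≤ ρ ^ s := Real.rpow_nonneg hρ.1.le s
  calc ‖ρ ^ s * g (emdenFowler m ρ)‖ = ρ ^ s * |g (emdenFowler m ρ)| := by
        rw [norm_mul, Real.norm_of_nonneg hρs, Real.norm_eq_abs]
    _ ≤ ρ ^ s * (C * (1 + emdenFowler m ρ) ^ r) := by
        gcongr
        exact hg _ (emdenFowler_pos hm hρ)
    _ = C * ρ ^ (s - m * r) := by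
        rw [one_add_emdenFowler_rpow hρ.1.le, sub_eq_add_neg, Real.rpow_add hρ.1, ← neg_mul]
        ring

end EmdenFowler

section RadialPotential

open scoped Topology

variable {N : ℕ} {F : ℝ → ℝ} {m ρ A C : ℝ} {x : E N}

/-- The Green potential of `F` in the variable `ρ = ‖x‖ ^ 2`, with its limiting value at the
origin. -/
def potentialProfile (m : ℝ) (F : ℝ → ℝ) (ρ : ℝ) : ℝ :=
  if ρ = 0 then ∫ τ in Ioi 0, τ * F τ else greenPotential F (emdenFowler m ρ)

/-- The first derivative of `potentialProfile`. -/
def potentialProfile₁ (m : ℝ) (F : ℝ → ℝ) (ρ : ℝ) : ℝ :=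
  -m * (ρ ^ (-m - 1) * ∫ τ in Ioi (emdenFowler m ρ), F τ)

/-- The second derivative of `potentialProfile`, read off from the radial Poisson equation
`ρ ψ'' + (m + 1) ψ' = -m ^ 2 * ρ ^ (-2 * m - 1) * F`. -/
def potentialProfile₂ (m : ℝ) (F : ℝ → ℝ) (ρ : ℝ) : ℝ :=
  ρ⁻¹ * (-(m + 1) * potentialProfile₁ m F ρ - m ^ 2 * (ρ ^ (-2 * m - 1) * F (emdenFowler m ρ)))

theorem potentialProfile_of_ne_zero (hρ : ρ ≠ 0) :
    potentialProfile m F ρ = greenPotential F (emdenFowler m ρ) := if_neg hρ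

theorem potentialProfile₁_zero (hm : 0 < m) : potentialProfile₁ m F 0 = 0 := by
  simp [potentialProfile₁, Real.zero_rpow (show -m - 1 ≠ 0 by linarith)]

theorem hasDerivAt_potentialProfile (hm : 0 < m) (hF : Continuous F)
    (hF₀ : IntegrableOn F (Ioi 0)) (hF₁ : IntegrableOn (fun τ => τ * F τ) (Ioi 0))
    (hρ : ρ ∈ Ioo 0 1) : HasDerivAt (potentialProfile m F) (potentialProfile₁ m F ρ) ρ := by
  have hcomp := (hasDerivAt_greenPotential hF hF₀ hF₁ (emdenFowler_pos hm hρ)).comp ρ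
    (hasDerivAt_emdenFowler hρ.1)
  refine (hcomp.congr_of_eventuallyEq ?_).congr_deriv (by rw [potentialProfile₁]; ring)
  filter_upwards [lt_mem_nhds hρ.1] with s hs using potentialProfile_of_ne_zero hs.ne'

theorem hasDerivAt_potentialProfile₁ (hm : 0 < m) (hF : Continuous F)
    (hF₀ : IntegrableOn F (Ioi 0)) (hρ : ρ ∈ Ioo 0 1) :
    HasDerivAt (potentialProfile₁ m F) (potentialProfile₂ m F ρ) ρ := by
  have htail := (hasDerivAt_integral_Ioi hF hF₀ (emdenFowler_pos hm hρ)).comp ρ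
    (hasDerivAt_emdenFowler hρ.1)
  have hpow : HasDerivAt (fun ρ : ℝ => ρ ^ (-m - 1)) ((-m - 1) * ρ ^ (-m - 1 - 1)) ρ :=
    Real.hasDerivAt_rpow_const (Or.inl hρ.1.ne')
  have hsub : ρ ^ (-m - 1 - 1) = ρ⁻¹ * ρ ^ (-m - 1) := by
    rw [Real.rpow_sub_one hρ.1.ne' (-m - 1)]
    ring
  have hmul : ρ ^ (-m - 1) * ρ ^ (-m - 1) = ρ⁻¹ * ρ ^ (-2 * m - 1) := by
    rw [← Real.rpow_add hρ.1, ← Real.rpow_neg_one, ← Real.rpow_add hρ.1]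
    ring_nf
  refine ((hpow.mul htail).const_mul (-m)).congr_deriv ?_
  rw [potentialProfile₂, potentialProfile₁, hsub, Function.comp_apply]
  linear_combination -m ^ 2 * F (emdenFowler m ρ) * hmul

theorem continuousOn_potentialProfile₂ (hm : 0 < m) (hF : Continuous F)
    (hF₀ : IntegrableOn F (Ioi 0)) : ContinuousOn (potentialProfile₂ m F) (Ioo 0 1) := by
  refine continuousOn_of_forall_continuousAt fun ρ hρ => ?_
  have hψ₁ := (hasDerivAt_potentialProfile₁ hm hF hF₀ hρ).continuousAt
  have hT := (hasDerivAt_emdenFowler (m := m) hρ.1).continuousAt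
  exact (continuousAt_inv₀ hρ.1.ne').mul <| (hψ₁.const_mul _).sub <| continuousAt_const.mul <|
    (Real.continuousAt_rpow_const _ _ (Or.inl hρ.1.ne')).mul (hF.continuousAt.comp hT)

theorem isRadialProfile_potentialProfile (hm : 0 < m) (hA : m + 1 < m * A) (hF : Continuous F)
    (hF_le : ∀ t > 0, |F t| ≤ C * (1 + t) ^ (-1 - A)) :
    IsRadialProfile 1 (potentialProfile m F) (potentialProfile₁ m F) (potentialProfile₂ m F) := by
  have hA1 : 1 < A := by nlinarith
  have hA0 : 0 < A := by linarith
  have hF₀ := integrableOn_Ioi_of_abs_le hA0 hF hF_le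
  have hF₁ := integrableOn_mul_Ioi_of_abs_le hA1 hF hF_le
  have hψ₁ : Tendsto (potentialProfile₁ m F) (𝓝[>] 0) (𝓝 0) := by
    have htail := tendsto_rpow_mul_comp_emdenFowler (s := -m - 1) hm
      (fun t ht => abs_integral_Ioi_le hA0 hF_le (le_of_lt ht)) (by linarith)
    have hlim := htail.const_mul (-m)
    rwa [mul_zero] at hlim
  have hsource := tendsto_rpow_mul_comp_emdenFowler (s := -2 * m - 1) hm hF_le (by linarith)
  refine ⟨fun ρ hρ => ?_, fun ρ hρ => ?_, ?_, ?_, ?_, ?_⟩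
  · exact hasDerivAt_potentialProfile hm hF hF₀ hF₁ (by simpa using hρ)
  · exact hasDerivAt_potentialProfile₁ hm hF hF₀ (by simpa using hρ)
  · simpa using continuousOn_potentialProfile₂ hm hF hF₀
  · rw [potentialProfile, if_pos rfl]
    refine ((tendsto_greenPotential_atTop hF.aestronglyMeasurable hF₁).comp
      (tendsto_emdenFowler hm)).congr' ?_
    filter_upwards [self_mem_nhdsWithin] with ρ (hρ : 0 < ρ)
    exact (potentialProfile_of_ne_zero hρ.ne').symm
  · rwa [potentialProfile₁_zero hm]
  · have hlim := (hψ₁.const_mul (-(m + 1))).sub (hsource.const_mul (m ^ 2))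
    rw [mul_zero, mul_zero, sub_zero] at hlim
    refine hlim.congr' ?_
    filter_upwards [self_mem_nhdsWithin] with ρ (hρ : 0 < ρ)
    rw [potentialProfile₂, mul_inv_cancel_left₀ hρ.ne']

/-- The radial function on `ℝ ^ N`, `N = 2 * m + 2`, which solves
`-Δ V = 4 * m ^ 2 * ‖x‖ ^ (-4 * m - 2) * F` in the unit ball with zero boundary values, where
`F` is evaluated at the Emden–Fowler variable. -/
def radialPotential (m : ℝ) (F : ℝ → ℝ) (x : E N) : ℝ := potentialProfile m F (‖x‖ ^ 2)

/-- `V` is a radially symmetric classical solution of `-Δ V = f` in the unit ball with zero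
boundary values. -/
structure IsRadialDirichletSolution (f V : E N → ℝ) : Prop where
  continuousOn : ContinuousOn V (closedBall 0 1)
  contDiffOn : ContDiffOn ℝ 2 V (ball 0 1)
  neg_lap_eq : ∀ x ∈ ball 0 1, -lap V x = f x
  eq_zero : ∀ x, ‖x‖ = 1 → V x = 0
  radial : ∀ x y, ‖x‖ = ‖y‖ → V x = V y

theorem radialPotential_of_ne_zero (hx : x ≠ 0) :
    radialPotential m F x = greenPotential F (emdenFowler m (‖x‖ ^ 2)) :=
  potentialProfile_of_ne_zero (by positivity)

theorem radialPotential_pos (hm : 0 < m) (hF : AEStronglyMeasurable F (volume.restrict (Ioi 0)))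
    (hF₁ : IntegrableOn (fun τ => τ * F τ) (Ioi 0)) (hF0 : 0 ≤ F)
    (hpos : ∀ t > 0, 0 < greenPotential F t) (hx : x ∈ ball 0 1) : 0 < radialPotential m F x := by
  rcases eq_or_ne x 0 with rfl | hx0
  · rw [radialPotential, norm_zero, zero_pow two_ne_zero, potentialProfile, if_pos rfl]
    exact (hpos 1 one_pos).trans_le (greenPotential_le_integral_mul hF hF₁ hF0 1)
  · rw [radialPotential_of_ne_zero hx0]
    exact hpos _ (emdenFowler_pos hm (by simpa using norm_sq_mem_Ioo hx hx0))

theorem continuousAt_radialPotential (hF : AEStronglyMeasurable F (volume.restrict (Ioi 0)))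
    (hF₁ : IntegrableOn (fun τ => τ * F τ) (Ioi 0)) (hx : x ≠ 0) :
    ContinuousAt (radialPotential m F) x := by
  have hT := (hasDerivAt_emdenFowler (m := m) (show 0 < ‖x‖ ^ 2 by positivity)).continuousAt
  refine ((continuous_greenPotential hF hF₁).continuousAt.comp
    (continuousAt_comp_norm_sq hT)).congr ?_
  filter_upwards [isOpen_ne.mem_nhds hx] with y hy using (radialPotential_of_ne_zero hy).symm

theorem isRadialDirichletSolution_radialPotential (hm : 0 < m) (hN : 2 * m + 2 = N)
    (hA : m + 1 < m * A) (hF : Continuous F)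
    (hF_le : ∀ t > 0, |F t| ≤ C * (1 + t) ^ (-1 - A)) :
    IsRadialDirichletSolution (fun x : E N => 4 * m ^ 2 *
      ((‖x‖ ^ 2) ^ (-2 * m - 1) * F (emdenFowler m (‖x‖ ^ 2)))) (radialPotential m F) := by
  have hprofile := isRadialProfile_potentialProfile hm hA hF hF_le
  have hF₁ := integrableOn_mul_Ioi_of_abs_le (by nlinarith) hF hF_le
  refine ⟨continuousOn_of_forall_continuousAt fun x _ => ?_, hprofile.contDiffOn, fun x hx => ?_,
    fun x hx => ?_, fun x y hxy => by rw [radialPotential, radialPotential, hxy]⟩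
  · rcases eq_or_ne x 0 with rfl | hx0
    · exact hprofile.contDiffOn.continuousOn.continuousAt (ball_mem_nhds 0 one_pos)
    · exact continuousAt_radialPotential hF.aestronglyMeasurable hF₁ hx0
  · have hlap : lap (radialPotential m F) x = _ := hprofile.lap_comp_norm_sq hx
    rcases eq_or_ne x 0 with rfl | hx0
    · simp [hlap, potentialProfile₁_zero hm, Real.zero_rpow (show -(2 * m) - 1 ≠ 0 by linarith)]
    · have hρ : ‖x‖ ^ 2 ≠ 0 := by positivity
      rw [hlap, potentialProfile₂, mul_inv_cancel_left₀ hρ, ← hN]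
      ring
  · have hx0 : x ≠ 0 := norm_pos_iff.1 (by rw [hx]; exact one_pos)
    rw [radialPotential_of_ne_zero hx0, hx, one_pow, emdenFowler_one, greenPotential_zero]

end RadialPotential

section Henon

variable {N : ℕ} {m A B C p q α : ℝ} {u : ℝ → ℝ}

/-- The weight `‖x‖ ^ α` of the Hénon equation in the Emden–Fowler variable, where
`A = (N + α) / (N - 2)`. -/
def henonWeight (m A t : ℝ) : ℝ := (4 * m ^ 2)⁻¹ * (1 + |t|) ^ (-1 - A)

/-- The measure on the half-line with density `henonWeight m A`. -/
def henonMeasure (m A : ℝ) : Measure ℝ :=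
  (volume.restrict (Ioi 0)).withDensity fun t => ENNReal.ofReal (henonWeight m A t)

/-- The right-hand side of the Hénon equation in the Emden–Fowler variable. -/
def henonSource (m A p : ℝ) (u : ℝ → ℝ) (t : ℝ) : ℝ := henonWeight m A t * u t ^ p

theorem henonWeight_nonneg (t : ℝ) : 0 ≤ henonWeight m A t := by
  unfold henonWeight
  positivity

theorem henonWeight_pos (hm : 0 < m) (t : ℝ) : 0 < henonWeight m A t := by
  unfold henonWeight
  positivity

theorem continuous_henonWeight : Continuous (henonWeight m A) :=
  continuous_const.mul <| (continuous_const.add continuous_abs).rpow_const fun t =>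
    Or.inl (show 1 + |t| ≠ 0 by positivity)

theorem measurable_ofReal_henonWeight :
    Measurable fun t => ENNReal.ofReal (henonWeight m A t) :=
  continuous_henonWeight.measurable.ennreal_ofReal

instance sFinite_henonMeasure : SFinite (henonMeasure m A) := by
  unfold henonMeasure
  infer_instance

theorem henonMeasure_ne_zero (hm : 0 < m) : henonMeasure m A ≠ 0 := by
  rw [henonMeasure, Ne, withDensity_eq_zero_iff measurable_ofReal_henonWeight.aemeasurable]
  intro hzero
  have : (ae (volume.restrict (Ioi (0 : ℝ)))).NeBot := ae_restrict_neBot.2 (by simp)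
  obtain ⟨t, ht⟩ := hzero.exists
  exact (ENNReal.ofReal_pos.2 (henonWeight_pos hm t)).ne' ht

theorem ae_pos_henonMeasure : ∀ᵐ t ∂henonMeasure m A, 0 < t :=
  (withDensity_absolutelyContinuous _ _).ae_le (ae_restrict_mem measurableSet_Ioi)

theorem integrable_one_add_abs_rpow_henonMeasure {r : ℝ} (hr : r < A) :
    Integrable (fun t => (1 + |t|) ^ r) (henonMeasure m A) := by
  rw [henonMeasure, integrable_withDensity_iff measurable_ofReal_henonWeight
    (.of_forall fun _ => ENNReal.ofReal_lt_top)]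
  refine IntegrableOn.congr_fun ((integrableOn_one_add_rpow_Ioi (t := 0) (r := r + (-1 - A))
    (by linarith) le_rfl).const_mul (4 * m ^ 2)⁻¹) (fun t ht => ?_) measurableSet_Ioi
  have ht0 : 0 < t := ht
  rw [ENNReal.toReal_ofReal (henonWeight_nonneg t), henonWeight, abs_of_pos ht0,
    Real.rpow_add (by linarith)]
  ring

theorem hammerstein_henonMeasure :
    hammerstein greenKernel (henonMeasure m A) p u = greenPotential (henonSource m A p u) := by
  funext t
  rw [hammerstein, henonMeasure, integral_withDensity_eq_integral_toReal_smul
    measurable_ofReal_henonWeight (.of_forall fun _ => ENNReal.ofReal_lt_top), greenPotential]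
  refine integral_congr_ae (.of_forall fun τ => ?_)
  simp only [henonSource, ENNReal.toReal_ofReal (henonWeight_nonneg τ), smul_eq_mul]
  ring

theorem continuous_henonSource (hp : 0 < p) (hu : Continuous u) :
    Continuous (henonSource m A p u) :=
  continuous_henonWeight.mul (hu.rpow_const fun _ => Or.inr hp.le)

theorem henonSource_nonneg (hu0 : 0 ≤ u) : 0 ≤ henonSource m A p u := fun t =>
  mul_nonneg (henonWeight_nonneg t) (Real.rpow_nonneg (hu0 t) p)

theorem abs_henonSource_le (hp : 0 < p) (hu0 : 0 ≤ u) (huC : ∀ t, u t ≤ C) {t : ℝ} (ht : 0 < t) :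
    |henonSource m A p u t| ≤ (4 * m ^ 2)⁻¹ * C ^ p * (1 + t) ^ (-1 - A) := by
  have hpow : u t ^ p ≤ C ^ p := Real.rpow_le_rpow (hu0 t) (huC t) hp.le
  rw [abs_of_nonneg (henonSource_nonneg hu0 t), henonSource, henonWeight, abs_of_pos ht,
    mul_right_comm]
  gcongr

theorem exists_henonSource_system (hm : 0 < m) (hA : 1 < A) (hB : 1 < B) (hp : 0 < p) (hq : 0 < q)
    (hpq : p * q ≠ 1) (hAB : 1 < A / (p + 1) + B / (q + 1)) :
    ∃ u w : ℝ → ℝ, Continuous u ∧ Continuous w ∧ 0 ≤ u ∧ 0 ≤ w ∧ (∀ t > 0, 0 < u t ∧ 0 < w t) ∧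
      (∃ C, ∀ t, u t ≤ C ∧ w t ≤ C) ∧
      w = greenPotential (henonSource m A p u) ∧ u = greenPotential (henonSource m B q w) := by
  have hne (A : ℝ) : NeZero (henonMeasure m A) := ⟨henonMeasure_ne_zero hm⟩
  simpa only [hammerstein_henonMeasure] using
    exists_greenKernel_system (μ := henonMeasure m A) (ν := henonMeasure m B)
      ae_pos_henonMeasure ae_pos_henonMeasure
      (fun _ => integrable_one_add_abs_rpow_henonMeasure)
      (fun _ => integrable_one_add_abs_rpow_henonMeasure) hA hB hp hq hpq hAB

theorem radialPotential_henonSource_pos (hm : 0 < m) (hA : 1 < A) (hp : 0 < p) (hu : Continuous u)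
    (hu0 : 0 ≤ u) (huC : ∀ t, u t ≤ C) (hpos : ∀ t > 0, 0 < greenPotential (henonSource m A p u) t)
    {x : E N} (hx : x ∈ ball 0 1) : 0 < radialPotential m (henonSource m A p u) x :=
  have hF := continuous_henonSource hp hu
  radialPotential_pos hm hF.aestronglyMeasurable (integrableOn_mul_Ioi_of_abs_le hA hF fun _ ht =>
    abs_henonSource_le hp hu0 huC ht) (henonSource_nonneg hu0) hpos hx

theorem henonWeight_emdenFowler (hm : 0 < m) (hα : 0 < α) (hA : m * A = m + 1 + α / 2) {x : E N}
    (hx : x ∈ ball 0 1) : 4 * m ^ 2 * ((‖x‖ ^ 2) ^ (-2 * m - 1) *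
      henonWeight m A (emdenFowler m (‖x‖ ^ 2))) = ‖x‖ ^ α := by
  rcases eq_or_ne x 0 with rfl | hx0
  · simp [Real.zero_rpow hα.ne', Real.zero_rpow (show -(2 * m) - 1 ≠ 0 by linarith)]
  have hρ : ‖x‖ ^ 2 ∈ Ioo 0 1 := by simpa using norm_sq_mem_Ioo hx hx0
  rw [henonWeight, abs_of_pos (emdenFowler_pos hm hρ), one_add_emdenFowler_rpow hρ.1.le,
    mul_left_comm _ (4 * m ^ 2)⁻¹, ← Real.rpow_add hρ.1, mul_inv_cancel_left₀ (by positivity),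
    ← Real.rpow_natCast, ← Real.rpow_mul (norm_nonneg x)]
  congr 1
  push_cast
  linear_combination 2 * hA

theorem isRadialDirichletSolution_henonSource (hm : 0 < m) (hN : 2 * m + 2 = N) (hα : 0 < α)
    (hA : m * A = m + 1 + α / 2) (hp : 0 < p) (hu : Continuous u) (hu0 : 0 ≤ u)
    (huC : ∀ t, u t ≤ C) {U : E N → ℝ} (hU : ∀ x ≠ 0, U x = u (emdenFowler m (‖x‖ ^ 2))) :
    IsRadialDirichletSolution (fun x => ‖x‖ ^ α * U x ^ p)
      (radialPotential m (henonSource m A p u)) := by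
  have hsol := isRadialDirichletSolution_radialPotential hm hN (by linarith)
    (continuous_henonSource hp hu) fun t ht => abs_henonSource_le (m := m) (A := A) hp hu0 huC ht
  refine { hsol with neg_lap_eq := fun x hx => ?_ }
  rw [hsol.neg_lap_eq x hx, henonSource, ← mul_assoc, mul_assoc (4 * m ^ 2), ← mul_assoc,
    ← mul_assoc, mul_assoc (4 * m ^ 2), henonWeight_emdenFowler hm hα hA hx]
  rcases eq_or_ne x 0 with rfl | hx0
  · rw [norm_zero, Real.zero_rpow hα.ne', zero_mul, zero_mul]
  · rw [hU x hx0]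

end Henon

theorem stmt14_general {N : ℕ} (hN : 3 ≤ N) (α β p q : ℝ) (hα : 0 < α) (hβ : 0 < β)
    (hp : 0 < p) (hq : 0 < q) (hpq : p * q ≠ 1)
    (hhyp : ((N : ℝ) + α) / (p + 1) + ((N : ℝ) + β) / (q + 1) > (N : ℝ) - 2) :
    ∃ u v : E N → ℝ,
      ContinuousOn u (closedBall 0 1) ∧ ContinuousOn v (closedBall 0 1) ∧
      ContDiffOn ℝ 2 u (ball (0 : E N) 1) ∧
      ContDiffOn ℝ 2 v (ball (0 : E N) 1) ∧
      (∀ x ∈ ball (0 : E N) 1, 0 < u x ∧ 0 < v x) ∧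
      (∀ x : E N, ‖x‖ = 1 → u x = 0 ∧ v x = 0) ∧
      (∀ x ∈ ball (0 : E N) 1,
        -lap v x = ‖x‖ ^ α * u x ^ p ∧ -lap u x = ‖x‖ ^ β * v x ^ q) ∧
      (∀ x y : E N, ‖x‖ = ‖y‖ → u x = u y) ∧
      (∀ x y : E N, ‖x‖ = ‖y‖ → v x = v y) := by
  have hN3 : (3 : ℝ) ≤ N := mod_cast hN
  set m : ℝ := (N - 2) / 2 with hm_def
  have hmN : 2 * m + 2 = N := by rw [hm_def]; ring
  have hm : 0 < m := by linarith
  have hexponent (γ : ℝ) : m * ((N + γ) / (N - 2)) = m + 1 + γ / 2 := by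
    rw [show (N : ℝ) - 2 = 2 * m by linarith, ← hmN]; field_simp
  have hA := hexponent α
  have hB := hexponent β
  set A : ℝ := (N + α) / (N - 2)
  set B : ℝ := (N + β) / (N - 2)
  have hA1 : 1 < A := by nlinarith
  have hB1 : 1 < B := by nlinarith
  have hAB : 1 < A / (p + 1) + B / (q + 1) := by
    rw [div_right_comm, div_right_comm (N + β : ℝ), ← add_div, lt_div_iff₀ (by linarith)]
    linarith
  obtain ⟨u, w, hu, hw, hu0, hw0, hpos, ⟨C, hC⟩, hwu, huw⟩ :=
    exists_henonSource_system hm hA1 hB1 hp hq hpq hAB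
  have hU := isRadialDirichletSolution_henonSource hm hmN hβ hB hq hw hw0 (fun t => (hC t).2)
    (U := radialPotential m (henonSource m A p u)) fun x hx => by
      rw [radialPotential_of_ne_zero hx, ← hwu]
  have hV := isRadialDirichletSolution_henonSource hm hmN hα hA hp hu hu0 (fun t => (hC t).1)
    (U := radialPotential m (henonSource m B q w)) fun x hx => by
      rw [radialPotential_of_ne_zero hx, ← huw]
  refine ⟨_, _, hU.continuousOn, hV.continuousOn, hU.contDiffOn, hV.contDiffOn,
    fun x hx => ⟨?_, ?_⟩, fun x hx => ⟨hU.eq_zero x hx, hV.eq_zero x hx⟩,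
    fun x hx => ⟨hV.neg_lap_eq x hx, hU.neg_lap_eq x hx⟩, hU.radial, hV.radial⟩
  · exact radialPotential_henonSource_pos hm hB1 hq hw hw0 (fun t => (hC t).2)
      (huw ▸ fun t ht => (hpos t ht).1) hx
  · exact radialPotential_henonSource_pos hm hA1 hp hu hu0 (fun t => (hC t).1)
      (hwu ▸ fun t ht => (hpos t ht).2) hx

/-- Calanchi–Ruf part (b): the Hénon system below the weighted critical hyperbola,
with q > β/N, has a radially symmetric positive classical solution. -/
theorem stmt14 {N : ℕ} (hN : 3 ≤ N) (α β p q : ℝ)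
    (hα : 0 < α) (hβ : 0 < β) (hp : 1 < p) (hq : 1 < q)
    (hqβ : q > β / (N : ℝ))
    (hhyp : ((N : ℝ) + α) / (p + 1) + ((N : ℝ) + β) / (q + 1) > (N : ℝ) - 2) :
    ∃ u v : E N → ℝ,
      ContinuousOn u (closedBall 0 1) ∧ ContinuousOn v (closedBall 0 1) ∧
      ContDiffOn ℝ 2 u (ball (0 : E N) 1) ∧
      ContDiffOn ℝ 2 v (ball (0 : E N) 1) ∧
      (∀ x ∈ ball (0 : E N) 1, 0 < u x ∧ 0 < v x) ∧
      (∀ x : E N, ‖x‖ = 1 → u x = 0 ∧ v x = 0) ∧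
      (∀ x ∈ ball (0 : E N) 1,
        -lap v x = ‖x‖ ^ α * u x ^ p ∧ -lap u x = ‖x‖ ^ β * v x ^ q) ∧
      (∀ x y : E N, ‖x‖ = ‖y‖ → u x = u y) ∧
      (∀ x y : E N, ‖x‖ = ‖y‖ → v x = v y) := by
  exact stmt14_general hN α β p q hα hβ (by linarith) (by linarith)
    (one_lt_mul hp.le hq).ne' hhyp
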